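/- arXiv:1511.05090 — 6 statements merged into one kernel-verified Lean document; each statement's English description precedes it below -/
import Mathlib

section
/- Let ρ be a d×d complex density matrix, let n ≥ 1, let y > 1 be a real number with y(y−1) > d, and let 1 ≤ k ≤ n. Suppose A is a Hermitian n-site matrix that is orthogonal to all (k−1)-local operators, i.e. Tr(ρ^⊗n · B† · A) = 0 for every subset Σ ⊆ {1,…,n} with |Σ| ≤ k−1 and every B ∈ T_Σ (including the identity, for Σ = ∅). Then the coarse-grained squared Bures norm under D_y^⊗n satisfies ‖A‖²_{D_y^⊗n} ≤ d^k · y^(−2k) · (1 − y⁻¹)^(−k) · ‖A‖², where ‖A‖² = Tr(ρ^⊗n · A · A). -/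
open scoped ComplexOrder
open Matrix

noncomputable section

/-- The `n`-fold tensor power of a `d×d` matrix, on sites indexed by `Fin n → Fin d`:
`(ρ^{⊗n})(x,z) = ∏ i, ρ (x i) (z i)`. -/
def tensorPow (d n : ℕ) (ρ : Matrix (Fin d) (Fin d) ℂ) :
    Matrix (Fin n → Fin d) (Fin n → Fin d) ℂ :=
  fun x z => ∏ i, ρ (x i) (z i)

/-- Tensor product `A₁ ⊗ ⋯ ⊗ Aₙ` of single-site matrices. -/
def siteProd (d n : ℕ) (A : Fin n → Matrix (Fin d) (Fin d) ℂ) :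
    Matrix (Fin n → Fin d) (Fin n → Fin d) ℂ :=
  fun x z => ∏ i, A i (x i) (z i)

/-- `Ω_σ(A) = (σA + Aσ)/2`. -/
def Omega {m : Type*} [Fintype m] (σ A : Matrix m m ℂ) : Matrix m m ℂ :=
  (1 / 2 : ℂ) • (σ * A + A * σ)

/-- The depolarizing channel `D_y(A) = y⁻¹ A + (1 - y⁻¹) (Tr A / d) I` applied to site `i`
of an `n`-site matrix. -/
def depolSite (d n : ℕ) (y : ℝ) (i : Fin n)
    (M : Matrix (Fin n → Fin d) (Fin n → Fin d) ℂ) :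
    Matrix (Fin n → Fin d) (Fin n → Fin d) ℂ :=
  fun x z => ((y⁻¹ : ℝ) : ℂ) * M x z +
    ((1 - y⁻¹ : ℝ) : ℂ) / (d : ℂ) *
      (if x i = z i then ∑ a : Fin d, M (Function.update x i a) (Function.update z i a) else 0)

/-- `D_y^{⊗n}`: the depolarizing channel applied to every one of the `n` sites. -/
def depolPow (d n : ℕ) (y : ℝ) :
    Matrix (Fin n → Fin d) (Fin n → Fin d) ℂ → Matrix (Fin n → Fin d) (Fin n → Fin d) ℂ :=
  (List.finRange n).foldr (fun i f => depolSite d n y i ∘ f) id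

/-- `T_Σ`: the linear span of operators acting as `aᵢ` with `Tr(ρ aᵢ) = 0` on each site
`i ∈ S` and as the identity on all other sites. -/
def TS (d n : ℕ) (ρ : Matrix (Fin d) (Fin d) ℂ) (S : Finset (Fin n)) :
    Submodule ℂ (Matrix (Fin n → Fin d) (Fin n → Fin d) ℂ) :=
  Submodule.span ℂ {M | ∃ a : Fin n → Matrix (Fin d) (Fin d) ℂ,
    (∀ i ∈ S, (ρ * a i).trace = 0) ∧ (∀ i ∉ S, a i = 1) ∧ M = siteProd d n a}

/-- The permutation unitary `U_π`, with entries `(U_π)_{x,y} = 1` iff `x = y ∘ π⁻¹`. -/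
def permU (d n : ℕ) (π : Equiv.Perm (Fin n)) :
    Matrix (Fin n → Fin d) (Fin n → Fin d) ℂ :=
  fun x z => if x = z ∘ ⇑π⁻¹ then 1 else 0

/-- The symmetrizing channel `P(A) = (1/n!) ∑_π U_π A U_π†`. -/
def symmetrize (d n : ℕ) (A : Matrix (Fin n → Fin d) (Fin n → Fin d) ℂ) :
    Matrix (Fin n → Fin d) (Fin n → Fin d) ℂ :=
  ((n.factorial : ℂ))⁻¹ • ∑ π : Equiv.Perm (Fin n), permU d n π * A * (permU d n π)ᴴ

/-- Vertex operator `G_α^{(n)} = (I + (i/√n)α)^{⊗n}`. -/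
def GVertex (d n : ℕ) (α : Matrix (Fin d) (Fin d) ℂ) :
    Matrix (Fin n → Fin d) (Fin n → Fin d) ℂ :=
  tensorPow d n (1 + (Complex.I / (Real.sqrt n : ℂ)) • α)

section Core

set_option linter.unusedSectionVars false

variable {n : ℕ} {κ : Type*} [Fintype κ] [DecidableEq κ]

/-- Generic tensor product of single-site matrices. -/
def tp (A : Fin n → Matrix κ κ ℂ) : Matrix (Fin n → κ) (Fin n → κ) ℂ :=
  fun x z => ∏ i, A i (x i) (z i)

lemma tp_mul (A B : Fin n → Matrix κ κ ℂ) : tp A * tp B = tp (fun i => A i * B i) := by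
  ext x z
  simp only [tp, Matrix.mul_apply, Fintype.prod_sum, Finset.prod_mul_distrib]

lemma tp_conjTranspose (A : Fin n → Matrix κ κ ℂ) : (tp A)ᴴ = tp (fun i => (A i)ᴴ) := by
  ext x z
  simp [tp, Matrix.conjTranspose_apply]

lemma tp_one : tp (fun _ : Fin n => (1 : Matrix κ κ ℂ)) = 1 := by
  ext x z
  simp only [tp, Matrix.one_apply, Finset.prod_ite_zero]
  simp [funext_iff]

lemma tp_zero (A : Fin n → Matrix κ κ ℂ) (i : Fin n) (h : A i = 0) : tp A = 0 := by
  ext x z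
  simp only [tp, Matrix.zero_apply]
  exact Finset.prod_eq_zero (Finset.mem_univ i) (by simp [h])

lemma tp_smul (c : Fin n → ℂ) (A : Fin n → Matrix κ κ ℂ) :
    tp (fun i => c i • A i) = (∏ i, c i) • tp A := by
  ext x z
  simp [tp, Finset.prod_mul_distrib]

lemma tp_sum {J : Type*} [Fintype J] [DecidableEq J] (F : Fin n → J → Matrix κ κ ℂ) :
    tp (fun i => ∑ j, F i j) = ∑ s : Fin n → J, tp (fun i => F i (s i)) := by
  ext x z
  simp only [tp, Matrix.sum_apply, Fintype.prod_sum]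

open scoped MatrixOrder in
lemma tp_posSemidef (A : Fin n → Matrix κ κ ℂ) (h : ∀ i, (A i).PosSemidef) :
    (tp A).PosSemidef := by
  have : ∀ i, ∃ C : Matrix κ κ ℂ, A i = Cᴴ * C := fun i =>
    CStarAlgebra.nonneg_iff_eq_star_mul_self.mp (h i).nonneg
  choose C hC using this
  have : tp A = (tp C)ᴴ * tp C := by
    rw [tp_conjTranspose, tp_mul]
    congr 1
    funext i
    exact hC i
  rw [this]
  exact posSemidef_conjTranspose_mul_self _

lemma tp_mono (W R : Matrix κ κ ℂ) (hW : W.PosSemidef) (hR : R.PosSemidef) :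
    (tp (fun _ : Fin n => W + R) - tp (fun _ : Fin n => W)).PosSemidef := by
  have h1 : tp (fun _ : Fin n => W + R)
      = ∑ s : Fin n → Bool, tp (fun i => bif s i then W else R) := by
    rw [← tp_sum (fun _ j => bif j then W else R)]
    simp
  rw [h1, ← Finset.add_sum_erase _ _ (Finset.mem_univ (fun _ => true))]
  simp only [cond_true, add_sub_cancel_left]
  refine posSemidef_sum _ fun s _ => tp_posSemidef _ fun i => ?_
  cases s i <;> simpa

/-- The two components of the single-site map. -/
def VV (E G H : Matrix κ κ ℂ) (y : ℝ) : Bool → Matrix κ κ ℂ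
  | false => E * H
  | true => ((y⁻¹ : ℝ) : ℂ) • (1 - E * G)

/-- Number of nontrivial sites. -/
def wt (s : Fin n → Bool) : Finset (Fin n) := Finset.univ.filter (fun i => s i = true)

lemma VV_sum (E G H : Matrix κ κ ℂ) (y m : ℝ)
    (hH : H = ((y⁻¹ : ℝ) : ℂ) • G + (m : ℂ) • 1) :
    ∑ j, VV E G H y j = ((y⁻¹ : ℝ) : ℂ) • 1 + (m : ℂ) • E := by
  simp only [Fintype.sum_bool, VV, hH, mul_add, smul_sub, Matrix.mul_smul, mul_one]
  abel

lemma VV_orth (E G H : Matrix κ κ ℂ) (y : ℝ) (hE : E.IsHermitian) (hG : G.IsHermitian)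
    (hEG : E * G * E = E) (i j : Bool) (hij : i ≠ j) :
    (VV E G H y i)ᴴ * G * VV E G H y j = 0 := by
  have e1 : E * G * (1 - E * G) = 0 := by
    rw [mul_sub, mul_one, ← mul_assoc, hEG, sub_self]
  have e2 : (1 - E * G)ᴴ * G * E = 0 := by
    have := congrArg conjTranspose e1
    simpa [conjTranspose_mul, hE.eq, hG.eq, mul_assoc] using this
  cases i <;> cases j
  · exact absurd rfl hij
  · simp only [VV, conjTranspose_mul, hE.eq, Matrix.mul_smul]
    rw [mul_assoc Hᴴ, mul_assoc Hᴴ, e1, mul_zero, smul_zero]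
  · simp only [VV, conjTranspose_smul, Matrix.smul_mul]
    rw [← mul_assoc, e2, zero_mul, smul_zero]
  · exact absurd rfl hij

lemma VV_bound (E G H : Matrix κ κ ℂ) (y m : ℝ) (hy : 1 < y) (hm : 0 < m)
    (hE : E.PosSemidef) (hG : G.PosSemidef) (hG1 : (1 - G).PosSemidef)
    (hEG : E * G * E = E) (hEH : E * H * E = E)
    (hH : H = ((y⁻¹ : ℝ) : ℂ) • G + (m : ℂ) • 1) :
    (H - ((VV E G H y false)ᴴ * G * VV E G H y false
      + ((m * y ^ 2 : ℝ) : ℂ) • ((VV E G H y true)ᴴ * G * VV E G H y true))).PosSemidef := by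
  have hEh := hE.isHermitian.eq
  have hGh := hG.isHermitian.eq
  have hHh : Hᴴ = H := by
    rw [hH]; simp [conjTranspose_smul, hGh]
  have hy0 : (y : ℂ) ≠ 0 := by exact_mod_cast (by positivity : y ≠ 0)
  have key : H - ((VV E G H y false)ᴴ * G * VV E G H y false
      + ((m * y ^ 2 : ℝ) : ℂ) • ((VV E G H y true)ᴴ * G * VV E G H y true))
      = (1 - E * H)ᴴ * (H - (m : ℂ) • G) * (1 - E * H)
        + (m : ℂ) • ((H - G)ᴴ * E * (H - G)) := by
    have hs : ((m * y ^ 2 : ℝ) : ℂ) * (((y⁻¹ : ℝ) : ℂ) * ((y⁻¹ : ℝ) : ℂ)) = m := by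
      push_cast; field_simp
    simp only [VV, conjTranspose_sub, conjTranspose_smul, conjTranspose_mul, conjTranspose_one,
      hEh, hGh, hHh, Complex.star_def, Complex.conj_ofReal, Matrix.smul_mul, Matrix.mul_smul,
      smul_smul, hs, mul_assoc]
    have a1 : E * (G * E) = E := by rw [← mul_assoc, hEG]
    have a2 : E * (H * E) = E := by rw [← mul_assoc, hEH]
    have a3 : ∀ X, E * (G * (E * X)) = E * X := fun X => by
      rw [← mul_assoc G, ← mul_assoc E, a1]
    have a4 : ∀ X, E * (H * (E * X)) = E * X := fun X => by
      rw [← mul_assoc H, ← mul_assoc E, a2]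
    simp only [sub_mul, mul_sub, one_mul, mul_one, mul_assoc, a3, a4, Matrix.smul_mul,
      Matrix.mul_smul, smul_sub]
    abel
  rw [key]
  have hmcc : (0 : ℂ) ≤ m := by exact_mod_cast hm.le
  have hycc : (0 : ℂ) ≤ ((y⁻¹ : ℝ) : ℂ) := by
    exact_mod_cast (by positivity : (0 : ℝ) ≤ y⁻¹)
  refine PosSemidef.add (PosSemidef.conjTranspose_mul_mul_same ?_ _)
    (PosSemidef.smul (PosSemidef.conjTranspose_mul_mul_same hE _) hmcc)
  have : H - (m : ℂ) • G = ((y⁻¹ : ℝ) : ℂ) • G + (m : ℂ) • (1 - G) := by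
    rw [hH, smul_sub]; abel
  rw [this]
  exact (hG.smul hycc).add (hG1.smul hmcc)

/-- The core estimate at the level of vectors. -/
lemma core (E G H : Matrix κ κ ℂ) (y m : ℝ) (hy : 1 < y) (hm : 0 < m) (hmy : 1 < m * y ^ 2)
    (hE : E.PosSemidef) (hG : G.PosSemidef) (hG1 : (1 - G).PosSemidef)
    (hEG : E * G * E = E) (hEH : E * H * E = E)
    (hH : H = ((y⁻¹ : ℝ) : ℂ) • G + (m : ℂ) • 1) (k : ℕ)
    (a b : (Fin n → κ) → ℂ)
    (horth : ∀ s : Fin n → Bool, (wt s).card < k →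
      star (tp (fun i => VV E G H y (s i)) *ᵥ b) ⬝ᵥ (tp (fun _ => G) *ᵥ a) = 0)
    (N : ℝ) (hN1 : star b ⬝ᵥ (tp (fun _ => H) *ᵥ b) = N)
    (hN2 : (star (tp (fun _ => ((y⁻¹ : ℝ) : ℂ) • 1 + (m : ℂ) • E) *ᵥ b)
      ⬝ᵥ (tp (fun _ => G) *ᵥ a)).re = N) :
    N ≤ ((m * y ^ 2)⁻¹) ^ k * (star a ⬝ᵥ (tp (fun _ => G) *ᵥ a)).re := by
  set c : ℝ := (m * y ^ 2)⁻¹ with hc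
  have hc0 : 0 < c := by rw [hc]; positivity
  have hc1 : c < 1 := by rw [hc]; exact inv_lt_one_of_one_lt₀ hmy
  set V : (Fin n → Bool) → Matrix (Fin n → κ) (Fin n → κ) ℂ :=
    fun s => tp (fun i => VV E G H y (s i)) with hV
  set GG : Matrix (Fin n → κ) (Fin n → κ) ℂ := tp (fun _ => G) with hGG
  have hGGp : GG.PosSemidef := tp_posSemidef _ fun _ => hG
  set F := Finset.univ.filter (fun s : Fin n → Bool => k ≤ (wt s).card) with hF
  set P := ∑ s ∈ F, V s with hP
  -- the full map decomposes
  have hdec : star (tp (fun _ => ((y⁻¹ : ℝ) : ℂ) • 1 + (m : ℂ) • E) *ᵥ b) ⬝ᵥ (GG *ᵥ a)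
      = star (P *ᵥ b) ⬝ᵥ (GG *ᵥ a) := by
    rw [← VV_sum E G H y m hH, tp_sum (fun _ j => VV E G H y j)]
    rw [← Finset.sum_filter_add_sum_filter_not Finset.univ
      (fun s : Fin n → Bool => k ≤ (wt s).card)]
    rw [Matrix.add_mulVec, star_add, add_dotProduct, add_eq_left, Matrix.sum_mulVec, star_sum,
      sum_dotProduct]
    refine Finset.sum_eq_zero fun s hs => horth s ?_
    simpa using hs
  rw [hdec] at hN2
  set u := P *ᵥ b with hu
  -- the norm of u
  set T : (Fin n → Bool) → Matrix (Fin n → κ) (Fin n → κ) ℂ :=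
    fun s => tp (fun i => (VV E G H y (s i))ᴴ * G * VV E G H y (s i)) with hT
  have hTp : ∀ s, (T s).PosSemidef := fun s =>
    tp_posSemidef _ fun i => hG.conjTranspose_mul_mul_same _
  have hVV : ∀ s t, (V s)ᴴ * GG * V t = if s = t then T s else 0 := by
    intro s t
    rw [hV, hGG]
    simp only
    rw [tp_conjTranspose, tp_mul, tp_mul]
    split_ifs with h
    · subst h; rfl
    · obtain ⟨i, hi⟩ := Function.ne_iff.mp h
      exact tp_zero _ i (VV_orth E G H y hE.isHermitian hG.isHermitian hEG _ _ hi)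
  have hPP : Pᴴ * GG * P = ∑ s ∈ F, T s := by
    rw [hP, conjTranspose_sum, Finset.sum_mul, Finset.sum_mul]
    refine Finset.sum_congr rfl fun s hs => ?_
    rw [Finset.mul_sum]
    simp only [hVV]
    simp [hs]
  set W : Bool → Matrix κ κ ℂ := fun j =>
    (bif j then ((m * y ^ 2 : ℝ) : ℂ) else 1) • ((VV E G H y j)ᴴ * G * VV E G H y j) with hW
  have hWp : ∀ j, (W j).PosSemidef := by
    intro j
    refine (hG.conjTranspose_mul_mul_same _).smul ?_
    cases j
    · simp
    · simp only [cond_true]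
      exact_mod_cast (by positivity : (0 : ℝ) ≤ m * y ^ 2)
  have hWsum : tp (fun _ : Fin n => ∑ j, W j)
      = ∑ s : Fin n → Bool, (((m * y ^ 2) ^ (wt s).card : ℝ) : ℂ) • T s := by
    rw [tp_sum (fun _ j => W j)]
    refine Finset.sum_congr rfl fun s _ => ?_
    simp only [hW]
    rw [tp_smul]
    congr 1
    have : ∀ i, (bif s i then ((m * y ^ 2 : ℝ) : ℂ) else 1)
        = if s i = true then ((m * y ^ 2 : ℝ) : ℂ) else 1 := fun i => by
      cases s i <;> simp
    simp only [this]
    rw [Finset.prod_ite]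
    simp [wt]
  have hHW : (tp (fun _ : Fin n => H) - tp (fun _ : Fin n => ∑ j, W j)).PosSemidef := by
    have hR : (H - ∑ j, W j).PosSemidef := by
      have := VV_bound E G H y m hy hm hE hG hG1 hEG hEH hH
      convert this using 2
      simp only [hW, Fintype.sum_bool, cond_true, cond_false, one_smul]
      abel
    have := tp_mono (n := n) (∑ j, W j) (H - ∑ j, W j) (posSemidef_sum _ fun j _ => hWp j) hR
    simpa using this
  have hfin : (((c ^ k : ℝ) : ℂ) • tp (fun _ : Fin n => H) - Pᴴ * GG * P).PosSemidef := by
    have e : ((c ^ k : ℝ) : ℂ) • tp (fun _ : Fin n => H) - Pᴴ * GG * P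
        = ((c ^ k : ℝ) : ℂ) • (tp (fun _ : Fin n => H) - tp (fun _ : Fin n => ∑ j, W j))
          + ∑ s : Fin n → Bool, ((c ^ k * (m * y ^ 2) ^ (wt s).card
              - if k ≤ (wt s).card then 1 else 0 : ℝ) : ℂ) • T s := by
      have e2 : ∑ s : Fin n → Bool, ((c ^ k * (m * y ^ 2) ^ (wt s).card
              - if k ≤ (wt s).card then 1 else 0 : ℝ) : ℂ) • T s
          = ((c ^ k : ℝ) : ℂ) • tp (fun _ : Fin n => ∑ j, W j) - Pᴴ * GG * P := by
        rw [hPP, hWsum, hF, Finset.sum_filter, Finset.smul_sum, ← Finset.sum_sub_distrib]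
        refine Finset.sum_congr rfl fun s _ => ?_
        rw [smul_smul]
        split_ifs <;> simp [sub_smul]
      rw [e2, smul_sub]; abel
    rw [e]
    refine PosSemidef.add (hHW.smul ?_) (posSemidef_sum _ fun s _ => (hTp s).smul ?_)
    · exact_mod_cast (by positivity : (0 : ℝ) ≤ c ^ k)
    · have : (0 : ℝ) ≤ c ^ k * (m * y ^ 2) ^ (wt s).card - if k ≤ (wt s).card then 1 else 0 := by
        split_ifs with h
        · have h1 : c ^ k * (m * y ^ 2) ^ k = 1 := by
            rw [← mul_pow, hc, inv_mul_cancel₀ (by positivity), one_pow]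
          have h2 : (m * y ^ 2) ^ k ≤ (m * y ^ 2) ^ (wt s).card := pow_le_pow_right₀ hmy.le h
          have h3 : 0 ≤ c ^ k := by positivity
          nlinarith [mul_le_mul_of_nonneg_left h2 h3]
        · simp only [sub_zero]; positivity
      exact_mod_cast this
  have hu1 : (star u ⬝ᵥ (GG *ᵥ u)).re ≤ c ^ k * N := by
    have := hfin.dotProduct_mulVec_nonneg b
    rw [sub_mulVec, dotProduct_sub, smul_mulVec, dotProduct_smul, hN1] at this
    have e : star b ⬝ᵥ ((Pᴴ * GG * P) *ᵥ b) = star u ⬝ᵥ (GG *ᵥ u) := by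
      rw [hu, star_mulVec, ← dotProduct_mulVec, mulVec_mulVec, mulVec_mulVec]
    rw [e] at this
    have := (Complex.le_def.mp this).1
    simp only [smul_eq_mul, Complex.sub_re, Complex.zero_re, ← Complex.ofReal_mul,
      Complex.ofReal_re] at this
    linarith
  -- final
  have hq := hGGp.dotProduct_mulVec_nonneg (u - ((c ^ k : ℝ) : ℂ) • a)
  have hcross : star a ⬝ᵥ (GG *ᵥ u) = star (star u ⬝ᵥ (GG *ᵥ a)) := by
    rw [← star_dotProduct_star, star_star, star_mulVec, hGGp.isHermitian.eq,
      dotProduct_mulVec]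
  have hq2 : star (u - ((c ^ k : ℝ) : ℂ) • a) ⬝ᵥ (GG *ᵥ (u - ((c ^ k : ℝ) : ℂ) • a))
      = star u ⬝ᵥ (GG *ᵥ u) - ((c ^ k : ℝ) : ℂ) * (star u ⬝ᵥ (GG *ᵥ a))
        - ((c ^ k : ℝ) : ℂ) * star (star u ⬝ᵥ (GG *ᵥ a))
        + ((c ^ k : ℝ) : ℂ) * (((c ^ k : ℝ) : ℂ) * (star a ⬝ᵥ (GG *ᵥ a))) := by
    rw [← hcross]
    simp only [star_sub, star_smul, mulVec_sub, mulVec_smul, sub_dotProduct, dotProduct_sub,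
      smul_dotProduct, dotProduct_smul, smul_eq_mul, Complex.star_def, Complex.conj_ofReal]
    ring
  rw [hq2] at hq
  have hq3 := (Complex.le_def.mp hq).1
  simp only [Complex.add_re, Complex.sub_re, Complex.zero_re, Complex.re_ofReal_mul,
    Complex.star_def, Complex.conj_re, hN2] at hq3
  have hck : 0 < c ^ k := by positivity
  have : 0 ≤ c ^ k * (c ^ k * (star a ⬝ᵥ (GG *ᵥ a)).re - N) := by linarith
  have := nonneg_of_mul_nonneg_right this hck
  linarith

end Core

section Vec

variable {d n : ℕ}

/-- Vectorization of an `n`-site matrix. -/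
def vc (M : Matrix (Fin n → Fin d) (Fin n → Fin d) ℂ) : (Fin n → Fin d × Fin d) → ℂ :=
  fun p => M (fun i => (p i).1) (fun i => (p i).2)

/-- Inverse vectorization. -/
def uvc (b : (Fin n → Fin d × Fin d) → ℂ) : Matrix (Fin n → Fin d) (Fin n → Fin d) ℂ :=
  fun x z => b (fun i => (x i, z i))

lemma vc_uvc (b : (Fin n → Fin d × Fin d) → ℂ) : vc (uvc b) = b := rfl

lemma uvc_vc (M : Matrix (Fin n → Fin d) (Fin n → Fin d) ℂ) : uvc (vc M) = M := rfl

/-- The vectorized identity. -/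
def ev (d : ℕ) : Fin d × Fin d → ℂ := fun p => if p.1 = p.2 then 1 else 0

/-- Rank one matrix on the vectorized identity. -/
def Em (d : ℕ) : Matrix (Fin d × Fin d) (Fin d × Fin d) ℂ := fun p q => ev d p * ev d q

/-- Gram matrix of the form `Tr(ρ N† M)`. -/
def Gm (ρ : Matrix (Fin d) (Fin d) ℂ) : Matrix (Fin d × Fin d) (Fin d × Fin d) ℂ :=
  fun p q => if p.1 = q.1 then ρ q.2 p.2 else 0

lemma sum_pair (f : (Fin n → Fin d × Fin d) → ℂ) :
    ∑ p, f p = ∑ x : Fin n → Fin d, ∑ z : Fin n → Fin d, f (fun i => (x i, z i)) := by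
  rw [← Fintype.sum_prod_type']
  exact Fintype.sum_equiv (Equiv.arrowProdEquivProdArrow (Fin n) (fun _ => Fin d) (fun _ => Fin d))
    _ _ (fun p => rfl)

lemma dot_vc (N M : Matrix (Fin n → Fin d) (Fin n → Fin d) ℂ) :
    star (vc N) ⬝ᵥ vc M = (Nᴴ * M).trace := by
  simp only [dotProduct, sum_pair, Matrix.trace, Matrix.diag, Matrix.mul_apply,
    Matrix.conjTranspose_apply, Pi.star_apply, vc]
  rw [Finset.sum_comm]

lemma Gm_vc (ρ : Matrix (Fin d) (Fin d) ℂ) (M : Matrix (Fin n → Fin d) (Fin n → Fin d) ℂ) :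
    tp (fun _ => Gm ρ) *ᵥ vc M = vc (M * tensorPow d n ρ) := by
  ext p
  simp only [Matrix.mulVec, dotProduct, sum_pair, tp, Gm, vc, Matrix.mul_apply, tensorPow,
    Finset.prod_ite_zero]
  rw [Finset.sum_eq_single (fun i => (p i).1)]
  · simp [mul_comm]
  · intro x _ hx
    refine Finset.sum_eq_zero fun z _ => ?_
    rw [if_neg, zero_mul]
    intro h
    exact hx (funext fun i => (h i (Finset.mem_univ i)).symm)
  · simp

lemma Gm_posSemidef {ρ : Matrix (Fin d) (Fin d) ℂ} (h : ρ.PosSemidef) : (Gm ρ).PosSemidef := by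
  have : Gm ρ = Matrix.kronecker (1 : Matrix (Fin d) (Fin d) ℂ) ρᵀ := by
    ext p q
    simp [Gm, Matrix.kronecker, Matrix.one_apply]
  rw [this]
  exact PosSemidef.one.kronecker h.transpose

lemma Gm_one : Gm (1 : Matrix (Fin d) (Fin d) ℂ) = 1 := by
  ext p q
  simp only [Gm, Matrix.one_apply, Prod.ext_iff]
  by_cases h1 : p.1 = q.1 <;> by_cases h2 : p.2 = q.2 <;> simp [h1, h2, eq_comm]

lemma Gm_sub (ρ σ : Matrix (Fin d) (Fin d) ℂ) : Gm (ρ - σ) = Gm ρ - Gm σ := by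
  ext p q
  simp only [Gm, Matrix.sub_apply]
  split_ifs <;> simp

lemma Gm_add (ρ σ : Matrix (Fin d) (Fin d) ℂ) : Gm (ρ + σ) = Gm ρ + Gm σ := by
  ext p q
  simp only [Gm, Matrix.add_apply]
  split_ifs <;> simp

lemma Gm_smul (c : ℂ) (ρ : Matrix (Fin d) (Fin d) ℂ) : Gm (c • ρ) = c • Gm ρ := by
  ext p q
  simp only [Gm, Matrix.smul_apply]
  split_ifs <;> simp

lemma Em_posSemidef : (Em d).PosSemidef := by
  have : Em d = vecMulVec (ev d) (star (ev d)) := by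
    ext p q
    simp only [Em, vecMulVec_apply, Pi.star_apply, ev]
    split_ifs <;> simp
  rw [this]
  exact posSemidef_vecMulVec_self_star _

lemma ev_G (ρ a : Matrix (Fin d) (Fin d) ℂ) :
    ∑ p, ev d p * ∑ q, Gm ρ p q * a q.1 q.2 = (ρ * a).trace := by
  simp only [Fintype.sum_prod_type, ev, Gm, Matrix.trace, Matrix.diag, Matrix.mul_apply]
  simp
  rw [Finset.sum_comm]

lemma Em_Gm_Em (ρ : Matrix (Fin d) (Fin d) ℂ) : Em d * Gm ρ * Em d = ρ.trace • Em d := by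
  ext p q
  have := ev_G ρ 1
  rw [mul_one] at this
  rw [Matrix.smul_apply, ← this, mul_assoc]
  simp only [Matrix.mul_apply, Em, smul_eq_mul, Matrix.one_apply, Finset.sum_mul, Finset.mul_sum]
  refine Finset.sum_congr rfl fun r _ => Finset.sum_congr rfl fun t _ => ?_
  simp only [ev]
  ring

lemma one_sub_posSemidef {ρ : Matrix (Fin d) (Fin d) ℂ} (h : ρ.PosSemidef) (ht : ρ.trace = 1) :
    (1 - ρ).PosSemidef := by
  have hs := h.isHermitian.spectral_theorem
  have hle : ∀ i, h.isHermitian.eigenvalues i ≤ 1 := by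
    intro i
    have h1 := h.isHermitian.trace_eq_sum_eigenvalues
    rw [ht] at h1
    have h2 : (1 : ℝ) = ∑ i, h.isHermitian.eigenvalues i := by
      have h3 := congrArg Complex.re h1
      simpa using h3
    rw [h2]
    exact Finset.single_le_sum (fun j _ => h.eigenvalues_nonneg j) (Finset.mem_univ i)
  set U := h.isHermitian.eigenvectorUnitary
  have hU : (U : Matrix (Fin d) (Fin d) ℂ) * (U : Matrix (Fin d) (Fin d) ℂ)ᴴ = 1 :=
    Unitary.coe_mul_star_self U
  have e : 1 - ρ = (U : Matrix (Fin d) (Fin d) ℂ)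
      * (diagonal (fun i => ((1 - h.isHermitian.eigenvalues i : ℝ) : ℂ)))
      * (U : Matrix (Fin d) (Fin d) ℂ)ᴴ := by
    have e1 : diagonal (fun i => ((1 - h.isHermitian.eigenvalues i : ℝ) : ℂ))
        = 1 - diagonal (RCLike.ofReal ∘ h.isHermitian.eigenvalues) := by
      ext i j
      by_cases hij : i = j
      · subst hij; simp
      · simp [hij]
    rw [e1, mul_sub, sub_mul, mul_one, hU]
    congr 1
  rw [e]
  refine PosSemidef.mul_mul_conjTranspose_same (PosSemidef.diagonal fun i => ?_) _
  have := hle i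
  simp only [Pi.zero_apply]
  exact_mod_cast (by linarith : (0 : ℝ) ≤ 1 - h.isHermitian.eigenvalues i)

/-- Matrix of the single-site depolarizing channel. -/
def Dm (d : ℕ) (y : ℝ) : Matrix (Fin d × Fin d) (Fin d × Fin d) ℂ :=
  ((y⁻¹ : ℝ) : ℂ) • 1 + (((1 - y⁻¹) / d : ℝ) : ℂ) • Em d

lemma site_vc (X : Matrix (Fin d × Fin d) (Fin d × Fin d) ℂ) (i : Fin n)
    (b : (Fin n → Fin d × Fin d) → ℂ) (p : Fin n → Fin d × Fin d) :
    (tp (fun j => if j = i then X else 1) *ᵥ b) p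
      = ∑ r, X (p i) r * b (Function.update p i r) := by
  simp only [Matrix.mulVec, dotProduct]
  symm
  refine Finset.sum_of_injOn (fun r => Function.update p i r)
    (fun r _ t _ h => Function.update_injective p i h) (by simp) ?_ ?_
  · intro q _ hq
    have : ∃ j, j ≠ i ∧ p j ≠ q j := by
      by_contra hcon
      push Not at hcon
      apply hq
      refine ⟨q i, by simp, ?_⟩
      funext j
      by_cases hj : j = i
      · subst hj; simp
      · simp [hj, hcon j hj]
    obtain ⟨j, hj, hpq⟩ := this
    rw [tp, Finset.prod_eq_zero (Finset.mem_univ j), zero_mul]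
    simp [hj, hpq]
  · intro r _
    congr 1
    rw [tp, Finset.prod_eq_single i]
    · simp
    · intro j _ hj
      simp only [hj, if_false]
      rw [Function.update_of_ne hj, Matrix.one_apply_eq]
    · simp

lemma depolSite_vc (y : ℝ) (i : Fin n) (M : Matrix (Fin n → Fin d) (Fin n → Fin d) ℂ) :
    vc (depolSite d n y i M) = tp (fun j => if j = i then Dm d y else 1) *ᵥ vc M := by
  ext p
  rw [site_vc]
  have upd : ∀ (r : Fin d × Fin d), vc M (Function.update p i r)
      = M (Function.update (fun j => (p j).1) i r.1) (Function.update (fun j => (p j).2) i r.2) := by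
    intro r
    simp only [vc]
    congr 1 <;>
    · funext j
      by_cases hj : j = i
      · subst hj; simp
      · simp [hj]
  simp only [upd, Dm, Matrix.add_apply, Matrix.smul_apply, add_mul, Finset.sum_add_distrib]
  simp only [vc, depolSite]
  congr 1
  · rw [Finset.sum_eq_single (p i)]
    · simp
    · intro r _ hr
      simp [hr.symm]
    · simp
  · simp only [Em, ev, Fintype.sum_prod_type]
    split_ifs with h
    · simp [Finset.mul_sum]
    · simp

lemma depolPow_vc (y : ℝ) (M : Matrix (Fin n → Fin d) (Fin n → Fin d) ℂ) :
    vc (depolPow d n y M) = tp (fun _ => Dm d y) *ᵥ vc M := by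
  have key : ∀ l : List (Fin n), l.Nodup →
      vc ((l.foldr (fun i f => depolSite d n y i ∘ f) id) M)
        = tp (fun j => if j ∈ l then Dm d y else 1) *ᵥ vc M := by
    intro l
    induction l with
    | nil => intro _; simp [tp_one]
    | cons i l ih =>
      intro hl
      rw [List.nodup_cons] at hl
      simp only [List.foldr_cons, Function.comp_apply]
      rw [depolSite_vc, ih hl.2, mulVec_mulVec, tp_mul]
      congr 2
      funext j
      by_cases hj : j = i
      · subst hj; simp [hl.1]
      · simp [hj]
  have := key (List.finRange n) (List.nodup_finRange n)
  simpa [depolPow] using this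

lemma depolSite_star (y : ℝ) (i : Fin n) (M : Matrix (Fin n → Fin d) (Fin n → Fin d) ℂ) :
    depolSite d n y i Mᴴ = (depolSite d n y i M)ᴴ := by
  ext x z
  simp only [depolSite, Matrix.conjTranspose_apply, star_add, star_mul', star_div₀,
    Complex.star_def, Complex.conj_ofReal, Complex.conj_natCast, eq_comm (a := z i)]
  congr 2
  split_ifs <;> simp

lemma depolPow_star (y : ℝ) (M : Matrix (Fin n → Fin d) (Fin n → Fin d) ℂ) :
    depolPow d n y Mᴴ = (depolPow d n y M)ᴴ := by
  unfold depolPow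
  induction List.finRange n with
  | nil => rfl
  | cons i l ih =>
    simp only [List.foldr_cons, Function.comp_apply]
    rw [ih, depolSite_star]

lemma tensor_vc (ρ : Matrix (Fin d) (Fin d) ℂ) (y : ℝ) (ht : ρ.trace = 1) :
    depolPow d n y (tensorPow d n ρ)
      = tensorPow d n (((y⁻¹ : ℝ) : ℂ) • ρ + (((1 - y⁻¹) / d : ℝ) : ℂ) • 1) := by
  rw [← uvc_vc (depolPow d n y (tensorPow d n ρ)), depolPow_vc]
  ext x z
  simp only [uvc, Matrix.mulVec, dotProduct, tp, vc, tensorPow, ← Finset.prod_mul_distrib]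
  rw [← Fintype.prod_sum (fun i (q : Fin d × Fin d) => Dm d y (x i, z i) q * ρ q.1 q.2)]
  refine Finset.prod_congr rfl fun i _ => ?_
  simp only [Dm, Matrix.add_apply, Matrix.smul_apply, add_mul, Finset.sum_add_distrib]
  congr 1
  · rw [Finset.sum_eq_single (x i, z i)]
    · simp
    · intro r _ hr
      simp [hr.symm]
    · simp
  · simp only [Em, ev, Fintype.sum_prod_type, Matrix.one_apply]
    simp only [Matrix.trace, Matrix.diag] at ht
    split_ifs with h
    · simp [← Finset.mul_sum, ht]
    · simp

lemma VV_mem (hd : 1 ≤ d) (ρ : Matrix (Fin d) (Fin d) ℂ) (ht : ρ.trace = 1)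
    (H : Matrix (Fin d × Fin d) (Fin d × Fin d) ℂ) (y : ℝ) (s : Fin n → Bool)
    (b : (Fin n → Fin d × Fin d) → ℂ) :
    uvc (tp (fun i => VV (Em d) (Gm ρ) H y (s i)) *ᵥ b) ∈ TS d n ρ (wt s) := by
  have e : uvc (tp (fun i => VV (Em d) (Gm ρ) H y (s i)) *ᵥ b)
      = ∑ q, b q • siteProd d n
        (fun i => Matrix.of fun x z => VV (Em d) (Gm ρ) H y (s i) (x, z) (q i)) := by
    ext x z
    simp only [uvc, Matrix.mulVec, dotProduct, tp, Matrix.sum_apply, Matrix.smul_apply, siteProd,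
      smul_eq_mul, Matrix.of_apply]
    exact Finset.sum_congr rfl fun q _ => mul_comm _ _
  rw [e]
  refine Submodule.sum_mem _ fun q _ => Submodule.smul_mem _ _ ?_
  set g : Fin n → ℂ := fun i => ∑ t, ev d t * H t (q i) with hg
  have e0 : siteProd d n (fun i => Matrix.of fun x z => VV (Em d) (Gm ρ) H y (s i) (x, z) (q i))
      = (∏ i, if s i = true then 1 else g i) • siteProd d n (fun i => if s i = true then
          (Matrix.of fun x z => VV (Em d) (Gm ρ) H y true (x, z) (q i)) else 1) := by
    ext x z
    simp only [siteProd, Matrix.smul_apply, smul_eq_mul, ← Finset.prod_mul_distrib]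
    refine Finset.prod_congr rfl fun i _ => ?_
    cases s i
    · simp only [VV, Matrix.mul_apply, Em, hg, Matrix.of_apply, Bool.false_eq_true, if_false]
      simp only [mul_assoc, ← Finset.mul_sum]
      rw [mul_comm, Matrix.one_apply]
      rfl
    · simp
  rw [e0]
  refine Submodule.smul_mem _ _ (Submodule.subset_span ⟨_, ?_, ?_, rfl⟩)
  · intro i hi
    have hii : s i = true := by simpa [wt] using hi
    rw [if_pos hii, ← ev_G]
    have h0 : Em d * Gm ρ * VV (Em d) (Gm ρ) H y true = 0 := by
      simp only [VV, Matrix.mul_smul]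
      rw [mul_sub, mul_one, ← mul_assoc, Em_Gm_Em, ht, one_smul, sub_self, smul_zero]
    have h1 := congrFun (congrFun h0 (⟨0, hd⟩, ⟨0, hd⟩)) (q i)
    rw [mul_assoc] at h1
    simpa [Matrix.mul_apply, Em, ev] using h1
  · intro i hi
    have hii : ¬ s i = true := by simpa [wt] using hi
    rw [if_neg hii]

end Vec


/-- irrelevance of non-local operators: bound on the coarse-grained
Bures norm under `D_y^{⊗n}` for operators orthogonal to all `(k-1)`-local operators. -/
theorem nonlocal_contraction_bound
    (d n k : ℕ) (hd : 1 ≤ d) (hn : 1 ≤ n) (hk1 : 1 ≤ k) (hkn : k ≤ n)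
    (ρ : Matrix (Fin d) (Fin d) ℂ) (hρ : ρ.PosSemidef) (hρtr : ρ.trace = 1)
    (y : ℝ) (hy : 1 < y) (hyd : y * (y - 1) > d)
    (A : Matrix (Fin n → Fin d) (Fin n → Fin d) ℂ) (hA : A.IsHermitian)
    (horth : ∀ S : Finset (Fin n), S.card ≤ k - 1 →
      ∀ B ∈ TS d n ρ S, (tensorPow d n ρ * Bᴴ * A).trace = 0)
    (B : Matrix (Fin n → Fin d) (Fin n → Fin d) ℂ) (hB : B.IsHermitian)
    (hΩB : Omega (depolPow d n y (tensorPow d n ρ)) B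
        = depolPow d n y (Omega (tensorPow d n ρ) A)) :
    (depolPow d n y (Omega (tensorPow d n ρ) A) * B).trace
      ≤ (((d : ℝ) ^ k * y ^ (-(2 * (k : ℤ))) * (1 - y⁻¹) ^ (-(k : ℤ)) : ℝ) : ℂ)
        * (tensorPow d n ρ * A * A).trace := by
  have hd0 : (0 : ℝ) < d := by exact_mod_cast hd
  have hy0 : (0 : ℝ) < y := by linarith
  have hyi : y⁻¹ < 1 := inv_lt_one_of_one_lt₀ hy
  set m : ℝ := (1 - y⁻¹) / d with hm
  have hm0 : 0 < m := by rw [hm]; apply div_pos <;> linarith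
  have hmy : m * y ^ 2 = y * (y - 1) / d := by rw [hm]; field_simp
  have hmy1 : 1 < m * y ^ 2 := by rw [hmy, lt_div_iff₀ hd0]; linarith
  have hyc : (0 : ℂ) ≤ ((y⁻¹ : ℝ) : ℂ) := by exact_mod_cast (inv_pos.mpr hy0).le
  have hmc : (0 : ℂ) ≤ (m : ℂ) := by exact_mod_cast hm0.le
  set σ : Matrix (Fin d) (Fin d) ℂ := ((y⁻¹ : ℝ) : ℂ) • ρ + (m : ℂ) • 1 with hσ
  have hσp : σ.PosSemidef := (hρ.smul hyc).add (PosSemidef.one.smul hmc)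
  have hσt : σ.trace = 1 := by
    rw [hσ, trace_add, trace_smul, trace_smul, hρtr, trace_one, Fintype.card_fin, smul_eq_mul,
      smul_eq_mul]
    have : y⁻¹ * 1 + m * d = 1 := by rw [hm]; field_simp; ring
    exact_mod_cast this
  have hHG : Gm σ = ((y⁻¹ : ℝ) : ℂ) • Gm ρ + (m : ℂ) • 1 := by
    rw [hσ, Gm_add, Gm_smul, Gm_smul, Gm_one]
  have hEG : Em d * Gm ρ * Em d = Em d := by rw [Em_Gm_Em, hρtr, one_smul]
  have hEH : Em d * Gm σ * Em d = Em d := by rw [Em_Gm_Em, hσt, one_smul]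
  have hG1 : (1 - Gm ρ).PosSemidef := by
    rw [← Gm_one, ← Gm_sub]
    exact Gm_posSemidef (one_sub_posSemidef hρ hρtr)
  have hten : depolPow d n y (tensorPow d n ρ) = tensorPow d n σ := tensor_vc ρ y hρtr
  set R := tensorPow d n ρ with hR
  have hRh : Rᴴ = R := by
    have : R = tp (fun _ => ρ) := rfl
    rw [this, tp_conjTranspose, hρ.isHermitian.eq]
  set C := depolPow d n y B with hC
  have hCh : Cᴴ = C := by rw [hC, ← depolPow_star, hB.eq]
  have hDh : (tp (fun _ : Fin n => Dm d y))ᴴ = tp (fun _ : Fin n => Dm d y) := by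
    rw [tp_conjTranspose]
    congr 1
    funext _
    simp [Dm, conjTranspose_smul, (Em_posSemidef (d := d)).isHermitian.eq]
  -- first expression for the trace
  have hT1 : (depolPow d n y (Omega R A) * B).trace
      = star (vc B) ⬝ᵥ (tp (fun _ => Gm σ) *ᵥ vc B) := by
    rw [Gm_vc, dot_vc, hB.eq, ← hΩB, hten, Omega, Matrix.smul_mul, trace_smul, add_mul, trace_add,
      Matrix.trace_mul_comm (B * tensorPow d n σ) B, mul_assoc,
      Matrix.trace_mul_comm (tensorPow d n σ) (B * B), mul_assoc, smul_eq_mul]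
    ring
  have hpos : 0 ≤ (depolPow d n y (Omega R A) * B).trace := by
    rw [hT1]
    exact (tp_posSemidef _ fun _ => Gm_posSemidef hσp).dotProduct_mulVec_nonneg _
  have hNr : (depolPow d n y (Omega R A) * B).trace
      = (((depolPow d n y (Omega R A) * B).trace.re : ℝ) : ℂ) := by
    apply Complex.ext
    · simp
    · simpa using (Complex.le_def.mp hpos).2.symm
  -- second expression
  have hq : star (tp (fun _ => Dm d y) *ᵥ vc B) ⬝ᵥ (tp (fun _ => Gm ρ) *ᵥ vc A)
      = (C * (A * R)).trace := by
    rw [← depolPow_vc, Gm_vc, dot_vc, ← hC, hCh]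
  have hT2 : (depolPow d n y (Omega R A) * B).trace
      = (1 / 2 : ℂ) * (star (C * (A * R)).trace + (C * (A * R)).trace) := by
    have h1 : (depolPow d n y (Omega R A) * B).trace = (C * Omega R A).trace := by
      rw [Matrix.trace_mul_comm]
      nth_rewrite 1 [← hB.eq]
      rw [← dot_vc, depolPow_vc, dotProduct_mulVec]
      nth_rewrite 1 [← hDh]
      rw [← star_mulVec, ← depolPow_vc, dot_vc, ← hC, hCh]
    have h2 : star (C * (A * R)).trace = (C * (R * A)).trace := by
      rw [← trace_conjTranspose, conjTranspose_mul, conjTranspose_mul, hCh, hRh, hA.eq,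
        Matrix.trace_mul_comm]
    rw [h1, h2, Omega, Matrix.mul_smul, trace_smul, mul_add, trace_add, smul_eq_mul]
  have hre : (C * (A * R)).trace.re = (depolPow d n y (Omega R A) * B).trace.re := by
    rw [hT2]
    have : (1 / 2 : ℂ) = ((1 / 2 : ℝ) : ℂ) := by push_cast; rfl
    rw [this, Complex.re_ofReal_mul, Complex.add_re, Complex.star_def, Complex.conj_re]
    ring
  have hTA : star (vc A) ⬝ᵥ (tp (fun _ => Gm ρ) *ᵥ vc A) = (R * A * A).trace := by
    rw [Gm_vc, dot_vc, hA.eq, ← mul_assoc, Matrix.trace_mul_comm, mul_assoc]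
  have hmain := core (n := n) (Em d) (Gm ρ) (Gm σ) y m hy hm0 hmy1 Em_posSemidef
    (Gm_posSemidef hρ) hG1 hEG hEH hHG k (vc A) (vc B) (by
      intro s hs
      have h := horth (wt s) (by omega) _ (VV_mem hd ρ hρtr (Gm σ) y s (vc B))
      rw [Gm_vc, ← vc_uvc (tp (fun i => VV (Em d) (Gm ρ) (Gm σ) y (s i)) *ᵥ vc B), dot_vc,
        ← mul_assoc, Matrix.trace_mul_comm, ← mul_assoc]
      exact h)
    (depolPow d n y (Omega R A) * B).trace.re (by rw [← hT1]; exact hNr)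
    (by rw [← hre, ← hq]; rfl)
  rw [hTA] at hmain
  have hposA : 0 ≤ (R * A * A).trace := by
    rw [← hTA]
    exact (tp_posSemidef _ fun _ => Gm_posSemidef hρ).dotProduct_mulVec_nonneg _
  have hAr : (R * A * A).trace = (((R * A * A).trace.re : ℝ) : ℂ) := by
    apply Complex.ext
    · simp
    · simpa using (Complex.le_def.mp hposA).2.symm
  have hconst : (d : ℝ) ^ k * y ^ (-(2 * (k : ℤ))) * (1 - y⁻¹) ^ (-(k : ℤ))
      = ((m * y ^ 2)⁻¹) ^ k := by
    have h1 : (1 - y⁻¹) ≠ 0 := by linarith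
    rw [_root_.zpow_neg, _root_.zpow_neg, _root_.zpow_mul, zpow_natCast, zpow_natCast, ← inv_pow, ← inv_pow,
      ← mul_pow, ← mul_pow, hm]
    congr 1
    rw [zpow_ofNat]
    field_simp
  rw [hNr, hAr, hconst]
  exact_mod_cast hmain
end
end

section
/- Let ρ be a d×d complex density matrix, let n ≥ 1, let y > 1 be a real number, and let Σ ⊆ {1,…,n} with |Σ| = k. For every Hermitian A ∈ T_Σ, the coarse-grained squImageared Bures norm under D_y^⊗n satisfies ‖A‖²_{D_y^⊗n} ≤ d^k · y^(−2k) · (1 − y⁻¹)^(−k) · Tr(ρ^⊗n · A · A). -/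
open scoped ComplexOrder
open Matrix

noncomputable section

theorem siteProd_mul' {d n : ℕ} (a b : Fin n → Matrix (Fin d) (Fin d) ℂ) :
    siteProd d n a * siteProd d n b = siteProd d n (fun i => a i * b i) := by
  ext x z
  simp only [siteProd, Matrix.mul_apply]
  rw [Finset.prod_univ_sum]
  simp only [Fintype.piFinset_univ, Finset.prod_mul_distrib]

theorem siteProd_trace {d n : ℕ} (a : Fin n → Matrix (Fin d) (Fin d) ℂ) :
    (siteProd d n a).trace = ∏ i, (a i).trace := by
  simp only [siteProd, Matrix.trace, Matrix.diag]
  rw [Finset.prod_univ_sum]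
  simp only [Fintype.piFinset_univ]

theorem siteProd_conjT {d n : ℕ} (a : Fin n → Matrix (Fin d) (Fin d) ℂ) :
    (siteProd d n a)ᴴ = siteProd d n (fun i => (a i)ᴴ) := by
  ext x z
  simp [siteProd, Matrix.conjTranspose_apply]

open scoped MatrixOrder Matrix.Norms.L2Operator in
theorem psd_factor {m : Type*} [Fintype m] [DecidableEq m] {P : Matrix m m ℂ}
    (hP : P.PosSemidef) : ∃ b : Matrix m m ℂ, P = bᴴ * b :=
  CStarAlgebra.nonneg_iff_eq_star_mul_self.mp hP.nonneg

theorem siteProd_psd {d n : ℕ} (a : Fin n → Matrix (Fin d) (Fin d) ℂ)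
    (h : ∀ i, (a i).PosSemidef) : (siteProd d n a).PosSemidef := by
  have h2 : ∀ i, ∃ b : Matrix (Fin d) (Fin d) ℂ, a i = bᴴ * b := fun i => by
    have := (h i)
    exact psd_factor this
  choose b hb using h2
  have : siteProd d n a = (siteProd d n b)ᴴ * siteProd d n b := by
    rw [siteProd_conjT, siteProd_mul']
    congr 1
    funext i
    exact hb i
  rw [this]
  exact Matrix.posSemidef_conjTranspose_mul_self _

theorem siteProd_add_sub {d n : ℕ} (a b : Fin n → Matrix (Fin d) (Fin d) ℂ)
    (ha : ∀ i, (a i).PosSemidef) (hb : ∀ i, (b i).PosSemidef) :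
    (siteProd d n (fun i => a i + b i) - siteProd d n a).PosSemidef := by
  have e : siteProd d n (fun i => a i + b i) =
      ∑ t : Finset (Fin n), siteProd d n (fun i => if i ∈ t then a i else b i) := by
    ext x z
    rw [Matrix.sum_apply]
    simp only [siteProd, Matrix.add_apply]
    rw [Finset.prod_add]
    simp only [Finset.powerset_univ]
    refine Finset.sum_congr rfl fun t _ => ?_
    rw [← Finset.prod_mul_prod_compl t (fun i => (if i ∈ t then a i else b i) (x i) (z i))]
    congr 1
    · refine Finset.prod_congr rfl fun i hi => by simp [hi]
    · rw [← Finset.compl_eq_univ_sdiff]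
      refine Finset.prod_congr rfl fun i hi => ?_
      simp [Finset.mem_compl.1 hi]
  rw [e, ← Finset.sum_erase_add _ _ (Finset.mem_univ (Finset.univ : Finset (Fin n)))]
  simp only [Finset.mem_univ, if_true, add_sub_cancel_right]
  refine Matrix.posSemidef_sum _ fun t _ => siteProd_psd _ fun i => ?_
  split_ifs
  exacts [ha i, hb i]

theorem psd_trace_mul {m : Type*} [Fintype m] [DecidableEq m] {P Q : Matrix m m ℂ}
    (hP : P.PosSemidef) (hQ : Q.PosSemidef) : 0 ≤ (P * Q).trace := by
  obtain ⟨b, hb⟩ := psd_factor hP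
  rw [hb, Matrix.mul_assoc, Matrix.trace_mul_comm]
  exact (hQ.mul_mul_conjTranspose_same b).trace_nonneg

theorem density_sub_sq {d : ℕ} {ρ : Matrix (Fin d) (Fin d) ℂ} (hρ : ρ.PosSemidef)
    (hρtr : ρ.trace = 1) : (ρ - ρ * ρ).PosSemidef := by
  have hH := hρ.isHermitian
  set U : Matrix (Fin d) (Fin d) ℂ := (hH.eigenvectorUnitary : Matrix (Fin d) (Fin d) ℂ) with hU
  set D : Matrix (Fin d) (Fin d) ℂ := diagonal (RCLike.ofReal ∘ hH.eigenvalues) with hD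
  have hs : ρ = U * D * Uᴴ := by
    have := hH.spectral_theorem
    rw [Unitary.conjStarAlgAut_apply] at this
    exact this
  have hUU : Uᴴ * U = 1 := by
    have := Unitary.coe_star_mul_self hH.eigenvectorUnitary
    exact this
  have hsum : ∑ i, hH.eigenvalues i = 1 := by
    have := hH.trace_eq_sum_eigenvalues
    rw [hρtr] at this
    have h3 := congrArg Complex.re this
    simp at h3
    exact h3.symm
  have hle : ∀ i, hH.eigenvalues i ≤ 1 := fun i => by
    rw [← hsum]
    exact Finset.single_le_sum (fun j _ => hρ.eigenvalues_nonneg j) (Finset.mem_univ i)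
  have : ρ - ρ * ρ = U * (D - D * D) * Uᴴ := by
    have : U * D * Uᴴ * (U * D * Uᴴ) = U * D * (Uᴴ * U) * D * Uᴴ := by
      simp only [Matrix.mul_assoc]
    conv_lhs => rw [hs]
    rw [this, hUU]
    simp only [Matrix.mul_one, Matrix.mul_sub, Matrix.sub_mul, Matrix.mul_assoc]
  rw [this]
  apply Matrix.PosSemidef.mul_mul_conjTranspose_same
  rw [hD, Matrix.diagonal_mul_diagonal, Matrix.diagonal_sub]
  apply Matrix.PosSemidef.diagonal
  intro i
  have h1 := hle i
  have h0 := hρ.eigenvalues_nonneg i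
  have : (0:ℝ) ≤ hH.eigenvalues i - hH.eigenvalues i * hH.eigenvalues i := by nlinarith
  have h4 : (0:ℂ) ≤ ((hH.eigenvalues i - hH.eigenvalues i * hH.eigenvalues i : ℝ) : ℂ) := by
    exact_mod_cast this
  simpa using h4

/-- one-site depolarizing channel -/
def dep1 (d : ℕ) (y : ℝ) (c : Matrix (Fin d) (Fin d) ℂ) : Matrix (Fin d) (Fin d) ℂ :=
  ((y⁻¹ : ℝ) : ℂ) • c + (((1 - y⁻¹ : ℝ) : ℂ) / (d : ℂ) * c.trace) • 1

theorem depolSite_siteProd {d n : ℕ} (y : ℝ) (i : Fin n)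
    (c : Fin n → Matrix (Fin d) (Fin d) ℂ) :
    depolSite d n y i (siteProd d n c) =
      siteProd d n (Function.update c i (dep1 d y (c i))) := by
  ext x z
  simp only [depolSite, siteProd]
  rw [← Finset.mul_prod_erase _ _ (Finset.mem_univ i),
    ← Finset.mul_prod_erase _ (fun j => Function.update c i (dep1 d y (c i)) j (x j) (z j))
      (Finset.mem_univ i)]
  have h1 : ∀ a : Fin d, (∏ j, c j (Function.update x i a j) (Function.update z i a j)) =
      c i a a * ∏ j ∈ Finset.univ.erase i, c j (x j) (z j) := fun a => by
    rw [← Finset.mul_prod_erase _ _ (Finset.mem_univ i)]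
    congr 1
    · simp
    · refine Finset.prod_congr rfl fun j hj => ?_
      have := Finset.ne_of_mem_erase hj
      simp [this]
  have h2 : (∏ j ∈ Finset.univ.erase i, Function.update c i (dep1 d y (c i)) j (x j) (z j)) =
      ∏ j ∈ Finset.univ.erase i, c j (x j) (z j) := by
    refine Finset.prod_congr rfl fun j hj => ?_
    have := Finset.ne_of_mem_erase hj
    simp [this]
  rw [h2]
  simp only [h1, ← Finset.sum_mul, Function.update_self, dep1, Matrix.add_apply, Matrix.smul_apply,
    smul_eq_mul, Matrix.one_apply, Matrix.trace, Matrix.diag]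
  split_ifs <;> ring

theorem depolPow_siteProd {d n : ℕ} (y : ℝ) (c : Fin n → Matrix (Fin d) (Fin d) ℂ) :
    depolPow d n y (siteProd d n c) = siteProd d n (fun i => dep1 d y (c i)) := by
  have key : ∀ l : List (Fin n), l.Nodup →
      l.foldr (fun i f => depolSite d n y i ∘ f) id (siteProd d n c) =
        siteProd d n (fun i => if i ∈ l then dep1 d y (c i) else c i) := by
    intro l
    induction l with
    | nil => intro _; simp
    | cons i l ih =>
      intro hl
      rw [List.nodup_cons] at hl
      simp only [List.foldr_cons, Function.comp_apply]
      rw [ih hl.2, depolSite_siteProd]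
      congr 1
      funext j
      by_cases hj : j = i
      · subst hj
        simp [hl.1]
      · simp [hj]
  rw [depolPow, key _ (List.nodup_finRange n)]
  simp

theorem depolSite_add {d n : ℕ} (y : ℝ) (i : Fin n)
    (M N : Matrix (Fin n → Fin d) (Fin n → Fin d) ℂ) :
    depolSite d n y i (M + N) = depolSite d n y i M + depolSite d n y i N := by
  ext x z
  simp only [depolSite, Matrix.add_apply, Finset.sum_add_distrib]
  split_ifs <;> ring

theorem depolSite_smul {d n : ℕ} (y : ℝ) (i : Fin n) (r : ℂ)
    (M : Matrix (Fin n → Fin d) (Fin n → Fin d) ℂ) :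
    depolSite d n y i (r • M) = r • depolSite d n y i M := by
  ext x z
  simp only [depolSite, Matrix.smul_apply, smul_eq_mul, ← Finset.mul_sum]
  split_ifs <;> ring

theorem depolPow_add {d n : ℕ} (y : ℝ)
    (M N : Matrix (Fin n → Fin d) (Fin n → Fin d) ℂ) :
    depolPow d n y (M + N) = depolPow d n y M + depolPow d n y N := by
  unfold depolPow
  induction List.finRange n with
  | nil => simp
  | cons i l ih => simp only [List.foldr_cons, Function.comp_apply, ih, depolSite_add]

theorem depolPow_smul {d n : ℕ} (y : ℝ) (r : ℂ)
    (M : Matrix (Fin n → Fin d) (Fin n → Fin d) ℂ) :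
    depolPow d n y (r • M) = r • depolPow d n y M := by
  unfold depolPow
  induction List.finRange n with
  | nil => simp
  | cons i l ih => simp only [List.foldr_cons, Function.comp_apply, ih, depolSite_smul]

theorem Omega_add {m : Type*} [Fintype m] (σ A B : Matrix m m ℂ) :
    Omega σ (A + B) = Omega σ A + Omega σ B := by
  simp only [Omega, Matrix.mul_add, Matrix.add_mul, ← smul_add]
  congr 1; abel

theorem Omega_smul {m : Type*} [Fintype m] (σ A : Matrix m m ℂ) (r : ℂ) :
    Omega σ (r • A) = r • Omega σ A := by
  simp only [Omega, Matrix.mul_smul, Matrix.smul_mul, ← smul_add]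
  rw [smul_comm]

theorem siteProd_smul_on {d n : ℕ} (S : Finset (Fin n)) (r : ℂ)
    (a : Fin n → Matrix (Fin d) (Fin d) ℂ) :
    siteProd d n (fun i => if i ∈ S then r • a i else a i) = r ^ S.card • siteProd d n a := by
  ext x z
  simp only [siteProd, Matrix.smul_apply, smul_eq_mul]
  have : ∀ i, (if i ∈ S then r • a i else a i) (x i) (z i) =
      (if i ∈ S then r else 1) * a i (x i) (z i) := fun i => by split_ifs <;> simp
  simp only [this, Finset.prod_mul_distrib]
  congr 1
  simp [Finset.prod_ite_mem]

theorem depolPow_Omega {d n : ℕ} {ρ : Matrix (Fin d) (Fin d) ℂ} (y : ℝ)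
    (S : Finset (Fin n)) (A : Matrix (Fin n → Fin d) (Fin n → Fin d) ℂ)
    (hA : A ∈ TS d n ρ S) :
    depolPow d n y (Omega (tensorPow d n ρ) A) = (((y⁻¹ : ℝ) : ℂ) ^ S.card) •
      Omega (siteProd d n (fun i => if i ∈ S then ρ else dep1 d y ρ)) A := by
  induction hA using Submodule.span_induction with
  | mem M hM =>
    obtain ⟨a, h1, h2, rfl⟩ := hM
    have ht : tensorPow d n ρ = siteProd d n (fun _ => ρ) := rfl
    rw [ht, Omega, Omega, siteProd_mul', siteProd_mul', siteProd_mul', siteProd_mul',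
      depolPow_smul, depolPow_add, depolPow_siteProd, depolPow_siteProd, smul_comm, smul_add (_ ^ _),
      ← siteProd_smul_on, ← siteProd_smul_on]
    congr 3
    · funext i
      by_cases hi : i ∈ S
      · simp [hi, dep1, h1 i hi]
      · simp [hi, h2 i hi]
    · funext i
      by_cases hi : i ∈ S
      · simp [hi, dep1, Matrix.trace_mul_comm (a i) ρ, h1 i hi]
      · simp [hi, h2 i hi]
  | zero =>
    have h0 : (0 : Matrix (Fin n → Fin d) (Fin n → Fin d) ℂ) = (0:ℂ) • 0 := by simp
    rw [h0, Omega_smul, Omega_smul, depolPow_smul]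
    simp
  | add M N _ _ hM hN => rw [Omega_add, depolPow_add, hM, hN, Omega_add, smul_add]
  | smul r M _ hM => rw [Omega_smul, depolPow_smul, hM, Omega_smul, smul_comm]

theorem TS_comm {d n : ℕ} {ρ σ : Matrix (Fin d) (Fin d) ℂ}
    (S : Finset (Fin n)) (A : Matrix (Fin n → Fin d) (Fin n → Fin d) ℂ)
    (hA : A ∈ TS d n ρ S) :
    siteProd d n (fun i => if i ∈ S then 1 else σ) * A =
      A * siteProd d n (fun i => if i ∈ S then 1 else σ) := by
  induction hA using Submodule.span_induction with
  | mem M hM =>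
    obtain ⟨a, h1, h2, rfl⟩ := hM
    rw [siteProd_mul', siteProd_mul']
    congr 1
    funext i
    by_cases hi : i ∈ S
    · simp [hi]
    · simp [hi, h2 i hi]
  | zero => simp
  | add M N _ _ hM hN => rw [Matrix.mul_add, Matrix.add_mul, hM, hN]
  | smul r M _ hM => rw [Matrix.mul_smul, Matrix.smul_mul, hM]

theorem TS_trace {d n : ℕ} {ρ σ : Matrix (Fin d) (Fin d) ℂ} (hσ : σ.trace = ρ.trace)
    (S : Finset (Fin n)) (A C : Matrix (Fin n → Fin d) (Fin n → Fin d) ℂ)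
    (hA : A ∈ TS d n ρ S) (hC : C ∈ TS d n ρ S) :
    (siteProd d n (fun i => if i ∈ S then ρ else σ) * A * C).trace =
      (tensorPow d n ρ * A * C).trace := by
  induction hA using Submodule.span_induction with
  | mem M hM =>
    induction hC using Submodule.span_induction with
    | mem N hN =>
      obtain ⟨a, h1, h2, rfl⟩ := hM
      obtain ⟨b, h3, h4, rfl⟩ := hN
      have ht : tensorPow d n ρ = siteProd d n (fun _ => ρ) := rfl
      rw [ht, siteProd_mul', siteProd_mul', siteProd_mul', siteProd_mul', siteProd_trace,
        siteProd_trace]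
      refine Finset.prod_congr rfl fun i _ => ?_
      by_cases hi : i ∈ S
      · simp [hi]
      · simp [hi, h2 i hi, h4 i hi, hσ]
    | zero => simp
    | add M N _ _ hM hN => rw [Matrix.mul_add, Matrix.mul_add, trace_add, trace_add, hM, hN]
    | smul r M _ hM => rw [Matrix.mul_smul, Matrix.mul_smul, trace_smul, trace_smul, hM]
  | zero => simp
  | add M N _ _ hM hN =>
    simp only [Matrix.mul_add, Matrix.add_mul, trace_add, hM, hN]
  | smul r M _ hM => simp only [Matrix.mul_smul, Matrix.smul_mul, trace_smul, hM]

/-- bound on the coarse-grained Bures norm under `D_y^{⊗n}`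
for Hermitian elements of `T_Σ` with `|Σ| = k`. -/
theorem TS_contraction_bound
    (d n k : ℕ) (hd : 1 ≤ d) (hn : 1 ≤ n)
    (ρ : Matrix (Fin d) (Fin d) ℂ) (hρ : ρ.PosSemidef) (hρtr : ρ.trace = 1)
    (y : ℝ) (hy : 1 < y)
    (S : Finset (Fin n)) (hS : S.card = k)
    (A : Matrix (Fin n → Fin d) (Fin n → Fin d) ℂ) (hA : A.IsHermitian)
    (hATS : A ∈ TS d n ρ S)
    (B : Matrix (Fin n → Fin d) (Fin n → Fin d) ℂ) (hB : B.IsHermitian)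
    (hΩB : Omega (depolPow d n y (tensorPow d n ρ)) B
        = depolPow d n y (Omega (tensorPow d n ρ) A)) :
    (depolPow d n y (Omega (tensorPow d n ρ) A) * B).trace
      ≤ (((d : ℝ) ^ k * y ^ (-(2 * (k : ℤ))) * (1 - y⁻¹) ^ (-(k : ℤ)) : ℝ) : ℂ)
        * (tensorPow d n ρ * A * A).trace := by
  subst hS
  have hATS' := hATS
  have hy0 : 0 < y := by linarith
  have hyi : y⁻¹ < 1 := inv_lt_one_of_one_lt₀ hy
  have hd0 : (0:ℝ) < d := by exact_mod_cast hd
  set c : ℝ := (1 - y⁻¹) / d with hc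
  have hc0 : 0 < c := div_pos (by linarith) hd0
  set σ := dep1 d y ρ with hσ
  have hσe : σ = (c : ℂ) • 1 + ((y⁻¹ : ℝ) : ℂ) • ρ := by
    rw [hσ, dep1, hρtr, add_comm, hc]; push_cast; simp
  have hp1 : (((y⁻¹ : ℝ) : ℂ) • ρ).PosSemidef :=
    hρ.smul (by exact_mod_cast (inv_pos.2 hy0).le)
  have hp2 : ((c : ℂ) • (1 : Matrix (Fin d) (Fin d) ℂ)).PosSemidef :=
    Matrix.PosSemidef.one.smul (by exact_mod_cast hc0.le)
  have hσp : σ.PosSemidef := by rw [hσe]; exact hp2.add hp1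
  have hσtr : σ.trace = ρ.trace := by
    rw [hσe, hρtr, trace_add, trace_smul, trace_smul, trace_one, hρtr, hc]
    have : (d : ℂ) ≠ 0 := by exact_mod_cast hd0.ne'
    push_cast
    simp
    field_simp
    ring
  set W := siteProd d n (fun i => if i ∈ S then 1 else σ) with hW
  set R := siteProd d n (fun i => if i ∈ S then ρ else 1) with hR
  set P := siteProd d n (fun i => if i ∈ S then ρ else σ) with hP
  set τ := siteProd d n (fun _ => σ) with hτ
  have hWp : W.PosSemidef := siteProd_psd _ fun i => by
    split_ifs
    exacts [Matrix.PosSemidef.one, hσp]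
  have hRp : R.PosSemidef := siteProd_psd _ fun i => by
    split_ifs
    exacts [hρ, Matrix.PosSemidef.one]
  have hWR : W * R = P := by
    rw [hW, hR, hP, siteProd_mul']; congr 1; funext i; split_ifs <;> simp
  have hRW : R * W = P := by
    rw [hW, hR, hP, siteProd_mul']; congr 1; funext i; split_ifs <;> simp
  have hWA : W * A = A * W := TS_comm S A hATS
  have hτW : (τ - ((c : ℂ) ^ S.card) • W).PosSemidef := by
    have := siteProd_add_sub (d := d) (n := n)
      (fun i => if i ∈ S then (c : ℂ) • 1 else σ)
      (fun i => if i ∈ S then ((y⁻¹ : ℝ) : ℂ) • ρ else 0)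
      (fun i => by split_ifs; exacts [hp2, hσp])
      (fun i => by split_ifs; exacts [hp1, Matrix.PosSemidef.zero])
    convert this using 2
    · rw [hτ]; congr 1; funext i; split_ifs
      · exact hσe
      · simp
    · rw [hW, ← siteProd_smul_on]; congr 1; funext i; split_ifs <;> rfl
  have hRR : (R - R * R).PosSemidef := by
    have := siteProd_add_sub (d := d) (n := n)
      (fun i => if i ∈ S then ρ * ρ else 1)
      (fun i => if i ∈ S then ρ - ρ * ρ else 0)
      (fun i => by
        split_ifs
        · have := Matrix.posSemidef_conjTranspose_mul_self ρ
          rwa [hρ.isHermitian.eq] at this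
        · exact Matrix.PosSemidef.one)
      (fun i => by split_ifs; exacts [density_sub_sq hρ hρtr, Matrix.PosSemidef.zero])
    convert this using 2
    · rw [hR]; congr 1; funext i; split_ifs <;> simp
    · rw [hR, siteProd_mul']; congr 1; funext i; split_ifs <;> simp
  have hX := depolPow_Omega y S A hATS
  have hτ' : depolPow d n y (tensorPow d n ρ) = τ := depolPow_siteProd y (fun _ => ρ)
  rw [hτ'] at hΩB
  set X := depolPow d n y (Omega (tensorPow d n ρ) A) with hXd
  rw [← hσ, ← hP] at hX
  have e1 : (X * B).trace = (τ * (B * B)).trace := by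
    rw [← hΩB, Omega, Matrix.smul_mul, trace_smul, Matrix.add_mul, trace_add, Matrix.mul_assoc,
      Matrix.mul_assoc, Matrix.trace_mul_comm B (τ * B), Matrix.mul_assoc, smul_eq_mul]
    ring
  have e2 : (X * B).trace = ((y⁻¹ : ℝ) : ℂ) ^ S.card *
      ((1/2) * ((W * (B * (R * A))).trace + (W * (A * (R * B))).trace)) := by
    have h1 : (P * A * B).trace = (W * (B * (R * A))).trace := by
      rw [← hRW, Matrix.mul_assoc R, hWA, ← Matrix.mul_assoc R, Matrix.mul_assoc (R * A),
        Matrix.trace_mul_comm, Matrix.mul_assoc]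
    have h2 : (A * P * B).trace = (W * (A * (R * B))).trace := by
      rw [← hWR, ← Matrix.mul_assoc A, ← hWA]
      simp only [Matrix.mul_assoc]
    rw [hX, Omega, Matrix.smul_mul, Matrix.smul_mul, trace_smul, trace_smul, Matrix.add_mul,
      trace_add, h1, h2]
    simp only [smul_eq_mul]
  have e3 : (tensorPow d n ρ * A * A).trace = (W * (A * (R * A))).trace := by
    rw [← TS_trace hσtr S A A hATS hATS, ← hP, ← hRW, Matrix.mul_assoc R, hWA,
      ← Matrix.mul_assoc R, Matrix.mul_assoc (R * A), Matrix.trace_mul_comm, Matrix.mul_assoc]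
  have f1 : 0 ≤ (τ * (B * B)).trace - (c : ℂ) ^ S.card * (W * (B * B)).trace := by
    have hBB : (B * B).PosSemidef := by
      have := Matrix.posSemidef_conjTranspose_mul_self B
      rwa [hB.eq] at this
    have := psd_trace_mul hτW hBB
    rwa [Matrix.sub_mul, trace_sub, Matrix.smul_mul, trace_smul, smul_eq_mul] at this
  have f2 : 0 ≤ (W * (A * (R * A))).trace - (W * (A * (R * (R * A)))).trace := by
    have hq : (A * (R - R * R) * A).PosSemidef := by
      have := hRR.mul_mul_conjTranspose_same A
      rwa [hA.eq] at this
    have := psd_trace_mul hWp hq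
    simpa only [Matrix.mul_sub, Matrix.sub_mul, trace_sub, Matrix.mul_assoc] using this
  set l : ℝ := ((c ^ S.card) * y ^ S.card)⁻¹ with hl
  have f3 : 0 ≤ (W * (B * B)).trace - (l : ℂ) * ((W * (B * (R * A))).trace +
      (W * (A * (R * B))).trace) + (l : ℂ) ^ 2 * (W * (A * (R * (R * A)))).trace := by
    have hz := Matrix.posSemidef_conjTranspose_mul_self (B - (l : ℂ) • (R * A))
    have := psd_trace_mul hWp hz
    rw [conjTranspose_sub, conjTranspose_smul, conjTranspose_mul, hB.eq, hA.eq,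
      hRp.isHermitian.eq] at this
    simp only [Matrix.mul_sub, Matrix.sub_mul, trace_sub, Matrix.mul_assoc, Matrix.smul_mul,
      Matrix.mul_smul, trace_smul, smul_eq_mul, RCLike.star_def, Complex.conj_ofReal] at this
    convert this using 1
    ring
  rw [e3]
  have hK : (d : ℝ) ^ S.card * y ^ (-(2 * (S.card : ℤ))) * (1 - y⁻¹) ^ (-(S.card : ℤ)) =
      c ^ S.card * l ^ 2 := by
    have h1 : (1 - y⁻¹) = c * d := by rw [hc]; field_simp
    have hz : y ^ (-(2 * (S.card : ℤ))) = (y ^ S.card * y ^ S.card)⁻¹ := by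
      rw [_root_.zpow_neg, two_mul, zpow_add₀ hy0.ne', zpow_natCast]
    rw [h1, hz, hl, _root_.zpow_neg, zpow_natCast, mul_pow]
    field_simp
  rw [hK]
  have hcl : (c : ℂ) ^ S.card * (l : ℂ) = ((y⁻¹ : ℝ) : ℂ) ^ S.card := by
    have : c ^ S.card * l = y⁻¹ ^ S.card := by
      rw [hl, inv_pow]; field_simp
    exact_mod_cast this
  have g1 : (0:ℂ) ≤ (c : ℂ) ^ S.card := by exact_mod_cast (pow_pos hc0 _).le
  have g2 : (0:ℂ) ≤ (c : ℂ) ^ S.card * (l : ℂ) ^ 2 := by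
    have : 0 ≤ c ^ S.card * l ^ 2 := by positivity
    exact_mod_cast this
  have tot := add_nonneg (add_nonneg (mul_nonneg g2 f2) (mul_nonneg g1 f3)) f1
  rw [← sub_nonneg]
  refine tot.trans_eq ?_
  rw [← hcl] at e2
  push_cast
  rw [← e1]
  linear_combination (2 : ℂ) * e2
end
end

section
/- Let ρ be a d×d complex density matrix and n ≥ 1. If Σ and Σ' are distinct subsets of {1,…,n}, then T_Σ and T_{Σ'} are orthogonal with respect to the GNS inner product at ρ^⊗n: for every A ∈ T_Σ and B ∈ T_{Σ'}, Tr(ρ^⊗n · A† · B) = 0. -/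
open scoped ComplexOrder
open Matrix

noncomputable section

theorem siteProd_mul_aux (d n : ℕ) (a b : Fin n → Matrix (Fin d) (Fin d) ℂ) :
    siteProd d n a * siteProd d n b = siteProd d n (fun i => a i * b i) := by
  ext x z
  simp only [Matrix.mul_apply, siteProd, ← Finset.prod_mul_distrib]
  rw [Finset.prod_univ_sum, Fintype.piFinset_univ]

theorem siteProd_trace_aux (d n : ℕ) (a : Fin n → Matrix (Fin d) (Fin d) ℂ) :
    (siteProd d n a).trace = ∏ i, (a i).trace := by
  simp only [Matrix.trace, Matrix.diag_apply, siteProd]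
  rw [Finset.prod_univ_sum, Fintype.piFinset_univ]

theorem siteProd_conjTranspose_aux (d n : ℕ) (a : Fin n → Matrix (Fin d) (Fin d) ℂ) :
    (siteProd d n a)ᴴ = siteProd d n (fun i => (a i)ᴴ) := by
  ext x z
  simp [siteProd, Matrix.conjTranspose_apply]

theorem trace_conjTranspose_aux (d : ℕ) (ρ a : Matrix (Fin d) (Fin d) ℂ)
    (hρ : ρ.IsHermitian) (h : (ρ * a).trace = 0) : (ρ * aᴴ).trace = 0 := by
  have h2 : ((ρ * a)ᴴ).trace = 0 := by rw [Matrix.trace_conjTranspose, h, star_zero]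
  rw [Matrix.conjTranspose_mul, hρ.eq, Matrix.trace_mul_comm] at h2
  exact h2

theorem TS_generators_aux (d n : ℕ) (ρ : Matrix (Fin d) (Fin d) ℂ) (hρ : ρ.IsHermitian)
    (S S' : Finset (Fin n)) (hSS' : S ≠ S') (a b : Fin n → Matrix (Fin d) (Fin d) ℂ)
    (ha : ∀ i ∈ S, (ρ * a i).trace = 0) (ha' : ∀ i ∉ S, a i = 1)
    (hb : ∀ i ∈ S', (ρ * b i).trace = 0) (hb' : ∀ i ∉ S', b i = 1) :
    (tensorPow d n ρ * (siteProd d n a)ᴴ * siteProd d n b).trace = 0 := by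
  have ht : tensorPow d n ρ = siteProd d n (fun _ => ρ) := rfl
  rw [ht, siteProd_conjTranspose_aux, siteProd_mul_aux, siteProd_mul_aux, siteProd_trace_aux]
  obtain ⟨i, hi⟩ : ∃ i, ¬ (i ∈ S ↔ i ∈ S') := by
    by_contra hcon
    push Not at hcon
    exact hSS' (Finset.ext hcon)
  apply Finset.prod_eq_zero (Finset.mem_univ i)
  by_cases h1 : i ∈ S
  · have h2 : i ∉ S' := fun h => hi ⟨fun _ => h, fun _ => h1⟩
    rw [hb' i h2, mul_one]
    exact trace_conjTranspose_aux d ρ (a i) hρ (ha i h1)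
  · have h2 : i ∈ S' := by
      by_contra h
      exact hi ⟨fun h' => absurd h' h1, fun h' => absurd h' h⟩
    rw [ha' i h1, Matrix.conjTranspose_one, mul_one]
    exact hb i h2

/-- `T_Σ` and `T_{Σ'}` are orthogonal in the GNS inner product at `ρ^{⊗n}`
whenever `Σ ≠ Σ'`. -/
theorem TS_orthogonal
    (d n : ℕ) (hd : 1 ≤ d) (hn : 1 ≤ n)
    (ρ : Matrix (Fin d) (Fin d) ℂ) (hρ : ρ.PosSemidef) (hρtr : ρ.trace = 1)
    (S S' : Finset (Fin n)) (hSS' : S ≠ S')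
    (A B : Matrix (Fin n → Fin d) (Fin n → Fin d) ℂ)
    (hA : A ∈ TS d n ρ S) (hB : B ∈ TS d n ρ S') :
    (tensorPow d n ρ * Aᴴ * B).trace = 0 := by
  unfold TS at hA hB
  induction hA using Submodule.span_induction with
  | mem A hA =>
    obtain ⟨a, ha, ha', rfl⟩ := hA
    induction hB using Submodule.span_induction with
    | mem B hB =>
      obtain ⟨b, hb, hb', rfl⟩ := hB
      exact TS_generators_aux d n ρ hρ.isHermitian S S' hSS' a b ha ha' hb hb'
    | zero => simp
    | add x y _ _ hx hy => rw [Matrix.mul_add, Matrix.trace_add, hx, hy, add_zero]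
    | smul c x _ hx => rw [Matrix.mul_smul, Matrix.trace_smul, hx, smul_zero]
  | zero => simp
  | add x y _ _ hx hy =>
    rw [Matrix.conjTranspose_add, Matrix.mul_add, Matrix.add_mul, Matrix.trace_add, hx, hy,
      add_zero]
  | smul c x _ hx =>
    rw [Matrix.conjTranspose_smul, Matrix.mul_smul, Matrix.smul_mul, Matrix.trace_smul, hx,
      smul_zero]
end
end

section
/- Let ρ be a d×d complex density matrix, let y ≠ 0 be real, let k ≥ 1, and let a₁,…,a_k be d×d matrices with Tr(ρ aᵢ) = 0 for every i. Then the site-wise depolarizing channel acts as the scalar y^(−k) on the corresponding Ω-vector: D_y^⊗k( Ω_{ρ^⊗k}(a₁⊗…⊗a_k) ) = y^(−k) · Ω_{ρ^⊗k}(a₁⊗…⊗a_k). -/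
open scoped ComplexOrder
open Matrix

noncomputable section

theorem tp_mul_sp (d n : ℕ) (A B : Fin n → Matrix (Fin d) (Fin d) ℂ) :
    siteProd d n A * siteProd d n B = siteProd d n (fun i => A i * B i) := by
  ext x z
  simp only [Matrix.mul_apply, siteProd]
  rw [Finset.prod_univ_sum]
  simp only [Fintype.piFinset_univ, Finset.prod_mul_distrib]

theorem siteProd_ptrace (d n : ℕ) (A : Fin n → Matrix (Fin d) (Fin d) ℂ) (i : Fin n)
    (h : (A i).trace = 0) (x z : Fin n → Fin d) :
    ∑ b : Fin d, siteProd d n A (Function.update x i b) (Function.update z i b) = 0 := by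
  have key : ∀ b : Fin d, siteProd d n A (Function.update x i b) (Function.update z i b)
      = A i b b * ∏ j ∈ Finset.univ.erase i, A j (x j) (z j) := by
    intro b
    unfold siteProd
    rw [← Finset.mul_prod_erase Finset.univ _ (Finset.mem_univ i)]
    congr 1
    · simp
    · refine Finset.prod_congr rfl fun j hj => ?_
      have hji : j ≠ i := Finset.ne_of_mem_erase hj
      simp [Function.update_of_ne hji]
  simp only [key]
  rw [← Finset.sum_mul]
  have h2 : ∑ b, A i b b = 0 := h
  rw [h2, zero_mul]

theorem depolSite_smul_of_ptrace (d n : ℕ) (y : ℝ) (i : Fin n)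
    (M : Matrix (Fin n → Fin d) (Fin n → Fin d) ℂ) (c : ℂ)
    (h : ∀ x z, ∑ b : Fin d, M (Function.update x i b) (Function.update z i b) = 0) :
    depolSite d n y i (c • M) = (((y⁻¹ : ℝ) : ℂ) * c) • M := by
  ext x z
  simp only [depolSite, Matrix.smul_apply, smul_eq_mul, ← Finset.mul_sum, h]
  simp [mul_assoc]

theorem depol_foldr (d n : ℕ) (y : ℝ)
    (M : Matrix (Fin n → Fin d) (Fin n → Fin d) ℂ)
    (h : ∀ i x z, ∑ b : Fin d, M (Function.update x i b) (Function.update z i b) = 0)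
    (l : List (Fin n)) :
    l.foldr (fun i f => depolSite d n y i ∘ f) id M = (((y⁻¹ : ℝ) : ℂ) ^ l.length) • M := by
  induction l with
  | nil => simp
  | cons i l ih =>
    simp only [List.foldr_cons, Function.comp_apply, List.length_cons]
    rw [ih, depolSite_smul_of_ptrace d n y i M _ (h i), pow_succ']

/-- the site-wise depolarizing channel acts as the scalar `y^{-k}` on
`Ω_{ρ^{⊗k}}(a₁ ⊗ ⋯ ⊗ a_k)` for ρ-traceless `aᵢ`. -/
theorem depol_eigenvector
    (d k : ℕ) (hd : 1 ≤ d) (hk : 1 ≤ k)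
    (ρ : Matrix (Fin d) (Fin d) ℂ) (hρ : ρ.PosSemidef) (hρtr : ρ.trace = 1)
    (y : ℝ) (hy : y ≠ 0)
    (a : Fin k → Matrix (Fin d) (Fin d) ℂ) (ha : ∀ i, (ρ * a i).trace = 0) :
    depolPow d k y (Omega (tensorPow d k ρ) (siteProd d k a))
      = (((y ^ (-(k : ℤ)) : ℝ)) : ℂ) • Omega (tensorPow d k ρ) (siteProd d k a) := by
  have hpt : ∀ i x z, ∑ b : Fin d, Omega (tensorPow d k ρ) (siteProd d k a)
      (Function.update x i b) (Function.update z i b) = 0 := by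
    intro i x z
    have e : tensorPow d k ρ = siteProd d k (fun _ => ρ) := rfl
    simp only [Omega, e, tp_mul_sp, Matrix.smul_apply, Matrix.add_apply, smul_eq_mul]
    rw [← Finset.mul_sum, Finset.sum_add_distrib,
      siteProd_ptrace d k (fun i => ρ * a i) i (ha i) x z,
      siteProd_ptrace d k (fun i => a i * ρ) i ((Matrix.trace_mul_comm _ _).trans (ha i)) x z]
    simp
  unfold depolPow
  rw [depol_foldr d k y _ hpt, List.length_finRange]
  congr 1
  rw [_root_.zpow_neg, _root_.zpow_natCast]
  push_cast
  rw [_root_.inv_pow]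
end
end

section
/- Let ρ be a d×d complex density matrix, let n ≥ 1, and let α, β be d×d complex matrices with Tr(ρα) = 0 and Tr(ρβ) = 0. Then the GNS inner product of the operators G_α^{(n)} = (I + (i/√n)α)^{⊗n} and G_β^{(n)} = (I + (i/√n)β)^{⊗n} satisfies Tr( ρ^⊗n · (G_α^{(n)})† · G_β^{(n)} ) = (1 + Tr(ρ · α† · β)/n)^n. -/
open scoped ComplexOrder
open Matrix

noncomputable section

theorem tensorPow_mul_aux (d n : ℕ) (A B : Matrix (Fin d) (Fin d) ℂ) :
    tensorPow d n A * tensorPow d n B = tensorPow d n (A * B) := by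
  ext x z
  simp only [Matrix.mul_apply, tensorPow]
  rw [Finset.prod_univ_sum, Fintype.piFinset_univ]
  simp only [Finset.prod_mul_distrib]

theorem tensorPow_conjTranspose_aux (d n : ℕ) (A : Matrix (Fin d) (Fin d) ℂ) :
    (tensorPow d n A)ᴴ = tensorPow d n Aᴴ := by
  ext x z
  simp [Matrix.conjTranspose_apply, tensorPow]

theorem tensorPow_trace_aux (d n : ℕ) (A : Matrix (Fin d) (Fin d) ℂ) :
    (tensorPow d n A).trace = A.trace ^ n := by
  simp only [Matrix.trace, Matrix.diag_apply, tensorPow]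
  have h := Finset.prod_univ_sum (fun _ : Fin n => (Finset.univ : Finset (Fin d)))
    (fun _ a => A a a)
  rw [Fintype.piFinset_univ] at h
  rw [← h]
  simp

/-- GNS inner product of vertex operators:
`Tr(ρ^{⊗n} (G_α^{(n)})† G_β^{(n)}) = (1 + Tr(ρ α† β)/n)^n`. -/
theorem vertex_inner_product
    (d n : ℕ) (hd : 1 ≤ d) (hn : 1 ≤ n)
    (ρ : Matrix (Fin d) (Fin d) ℂ) (hρ : ρ.PosSemidef) (hρtr : ρ.trace = 1)
    (α β : Matrix (Fin d) (Fin d) ℂ)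
    (hα : (ρ * α).trace = 0) (hβ : (ρ * β).trace = 0) :
    (tensorPow d n ρ * (GVertex d n α)ᴴ * GVertex d n β).trace
      = (1 + (ρ * αᴴ * β).trace / (n : ℂ)) ^ n := by
  have hα' : (ρ * αᴴ).trace = 0 := by
    have h := congrArg star hα
    rw [← Matrix.trace_conjTranspose, Matrix.conjTranspose_mul, hρ.isHermitian.eq,
      Matrix.trace_mul_comm] at h
    simpa using h
  have hn0 : (n : ℂ) ≠ 0 := by exact_mod_cast (by omega : n ≠ 0)
  have hs : ((Real.sqrt n : ℝ) : ℂ) * ((Real.sqrt n : ℝ) : ℂ) = n := by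
    rw [← Complex.ofReal_mul, Real.mul_self_sqrt (Nat.cast_nonneg n)]
    simp
  have hc : star (Complex.I / (Real.sqrt n : ℂ)) * (Complex.I / (Real.sqrt n : ℂ))
      = 1 / (n : ℂ) := by
    rw [← hs]
    simp only [star_div₀, Complex.star_def, Complex.conj_I, Complex.conj_ofReal]
    rw [div_mul_div_comm]
    simp
  unfold GVertex
  rw [tensorPow_conjTranspose_aux, tensorPow_mul_aux, tensorPow_mul_aux, tensorPow_trace_aux]
  congr 1
  generalize Complex.I / (Real.sqrt n : ℂ) = c at hc
  rw [Matrix.conjTranspose_add, Matrix.conjTranspose_one, Matrix.conjTranspose_smul]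
  simp only [Matrix.mul_add, Matrix.add_mul, Matrix.mul_one, Matrix.mul_smul, Matrix.smul_mul,
    Matrix.trace_add, Matrix.trace_smul, hρtr, hα', hβ, smul_eq_mul]
  linear_combination (ρ * αᴴ * β).trace * hc
end
end

section
/- Let ρ be a d×d complex density matrix, let n ≥ 1, let y ≠ 0 be real, and let A be an n-site matrix with P(A) = 0, where P is the symmetrizing channel. Then the coarse-graining channel N = P ∘ D_y^⊗n annihilates the corresponding tangent vector: P( D_y^⊗n( Ω_{ρ^⊗n}(A) ) ) = 0, where Ω_{ρ^⊗n}(A) = (ρ^⊗n · A + A · ρ^⊗n)/2. -/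
open scoped ComplexOrder
open Matrix

noncomputable section

/-- Conjugation by a site permutation, as a reindexing. -/
def permT {d n : ℕ} (π : Equiv.Perm (Fin n))
    (M : Matrix (Fin n → Fin d) (Fin n → Fin d) ℂ) :
    Matrix (Fin n → Fin d) (Fin n → Fin d) ℂ :=
  fun x z => M (x ∘ π) (z ∘ π)

lemma permU_conj (d n : ℕ) (π : Equiv.Perm (Fin n))
    (M : Matrix (Fin n → Fin d) (Fin n → Fin d) ℂ) :
    permU d n π * M * (permU d n π)ᴴ = permT π M := by
  have key : ∀ x w : Fin n → Fin d, x = w ∘ ⇑(Equiv.symm π) ↔ x ∘ π = w := by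
    intro x w
    constructor
    · rintro rfl
      funext i
      simp
    · rintro rfl
      funext i
      simp
  ext x z
  simp [Matrix.mul_apply, permU, key, permT, apply_ite]

lemma symmetrize_eq (d n : ℕ) (M : Matrix (Fin n → Fin d) (Fin n → Fin d) ℂ) :
    symmetrize d n M = ((n.factorial : ℂ))⁻¹ • ∑ π : Equiv.Perm (Fin n), permT π M := by
  simp [symmetrize, permU_conj]

lemma permT_mul {d n : ℕ} (π : Equiv.Perm (Fin n))
    (M N : Matrix (Fin n → Fin d) (Fin n → Fin d) ℂ) :
    permT π (M * N) = permT π M * permT π N := by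
  ext x z
  simp only [permT, Matrix.mul_apply]
  refine (Equiv.sum_comp (Equiv.arrowCongr π (Equiv.refl (Fin d))).symm
    (fun w => M (x ∘ π) w * N w (z ∘ π))).symm.trans ?_
  rfl

lemma permT_tensorPow (d n : ℕ) (π : Equiv.Perm (Fin n)) (ρ : Matrix (Fin d) (Fin d) ℂ) :
    permT π (tensorPow d n ρ) = tensorPow d n ρ := by
  ext x z
  exact Equiv.prod_comp π (fun i => ρ (x i) (z i))

lemma permT_Omega (d n : ℕ) (π : Equiv.Perm (Fin n)) (ρ : Matrix (Fin d) (Fin d) ℂ)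
    (A : Matrix (Fin n → Fin d) (Fin n → Fin d) ℂ) :
    permT π (Omega (tensorPow d n ρ) A) = Omega (tensorPow d n ρ) (permT π A) := by
  have h : permT π (Omega (tensorPow d n ρ) A) =
      (1 / 2 : ℂ) • (permT π (tensorPow d n ρ * A) + permT π (A * tensorPow d n ρ)) := rfl
  rw [h, permT_mul, permT_mul, permT_tensorPow]
  rfl

lemma permT_depolSite (d n : ℕ) (y : ℝ) (π : Equiv.Perm (Fin n)) (i : Fin n)
    (M : Matrix (Fin n → Fin d) (Fin n → Fin d) ℂ) :
    permT π (depolSite d n y i M) = depolSite d n y (π i) (permT π M) := by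
  have key : ∀ (x : Fin n → Fin d) (a : Fin d),
      Function.update x (π i) a ∘ π = Function.update (x ∘ π) i a := fun x a =>
    Function.update_comp_eq_of_injective x π.injective i a
  ext x z
  simp only [permT, depolSite, key, Function.comp_apply]

lemma depolSite_comm (d n : ℕ) (y : ℝ) (i j : Fin n)
    (M : Matrix (Fin n → Fin d) (Fin n → Fin d) ℂ) :
    depolSite d n y i (depolSite d n y j M) = depolSite d n y j (depolSite d n y i M) := by
  rcases eq_or_ne i j with rfl | hij
  · rfl
  ext x z
  simp only [depolSite, Function.update_of_ne hij, Function.update_of_ne hij.symm]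
  have h : ∑ a : Fin d, ∑ b : Fin d, M (Function.update (Function.update x i a) j b)
        (Function.update (Function.update z i a) j b) =
      ∑ a : Fin d, ∑ b : Fin d, M (Function.update (Function.update x j a) i b)
        (Function.update (Function.update z j a) i b) := by
    rw [Finset.sum_comm]
    refine Finset.sum_congr rfl fun a _ => Finset.sum_congr rfl fun b _ => ?_
    rw [Function.update_comm hij, Function.update_comm hij]
  by_cases h1 : x i = z i <;> by_cases h2 : x j = z j <;>
    simp only [h1, h2, if_true, if_false, Finset.sum_add_distrib, ← Finset.mul_sum, h,
      Finset.sum_const_zero] <;> ring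

/-- The depolarizing map at one site as a linear map. -/
def depolSiteL (d n : ℕ) (y : ℝ) (i : Fin n) :
    Matrix (Fin n → Fin d) (Fin n → Fin d) ℂ →+ Matrix (Fin n → Fin d) (Fin n → Fin d) ℂ :=
  AddMonoidHom.mk' (depolSite d n y i) (by
    intro M N
    ext x z
    simp only [depolSite, Matrix.add_apply, Finset.sum_add_distrib]
    split_ifs <;> ring)

lemma depolSite_foldr (d n : ℕ) (y : ℝ) (l : List (Fin n))
    (M : Matrix (Fin n → Fin d) (Fin n → Fin d) ℂ) :
    l.foldr (fun i f => depolSite d n y i ∘ f) id M = l.foldr (depolSite d n y) M := by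
  induction l with
  | nil => rfl
  | cons i l ih => simp [ih]

lemma depolPow_sum (d n : ℕ) (y : ℝ) {ι : Type*} (s : Finset ι)
    (f : ι → Matrix (Fin n → Fin d) (Fin n → Fin d) ℂ) :
    depolPow d n y (∑ k ∈ s, f k) = ∑ k ∈ s, depolPow d n y (f k) := by
  simp only [depolPow, depolSite_foldr]
  generalize List.finRange n = l
  induction l with
  | nil => rfl
  | cons i l ih =>
    simp only [List.foldr_cons, ih]
    exact map_sum (depolSiteL d n y i) _ s

lemma permT_depolPow (d n : ℕ) (y : ℝ) (π : Equiv.Perm (Fin n))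
    (M : Matrix (Fin n → Fin d) (Fin n → Fin d) ℂ) :
    permT π (depolPow d n y M) = depolPow d n y (permT π M) := by
  simp only [depolPow, depolSite_foldr]
  have h1 : ∀ l : List (Fin n), permT π (l.foldr (depolSite d n y) M) =
      (l.map π).foldr (depolSite d n y) (permT π M) := by
    intro l
    induction l with
    | nil => rfl
    | cons i l ih => simp only [List.foldr_cons, List.map_cons, permT_depolSite, ih]
  have h2 : ((List.finRange n).map π).Perm (List.finRange n) := by
    rw [List.perm_ext_iff_of_nodup ((List.nodup_finRange n).map π.injective)
      (List.nodup_finRange n)]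
    intro a
    simpa using π.surjective a
  haveI : LeftCommutative (depolSite d n y) := ⟨fun i j M => depolSite_comm d n y i j M⟩
  rw [h1]
  exact h2.foldr_eq _

/-- if `P(A) = 0` then the coarse-graining channel `P ∘ D_y^{⊗n}` annihilates
the corresponding tangent vector `Ω_{ρ^{⊗n}}(A)`. -/
theorem coarse_graining_annihilates
    (d n : ℕ) (hd : 1 ≤ d) (hn : 1 ≤ n)
    (ρ : Matrix (Fin d) (Fin d) ℂ) (hρ : ρ.PosSemidef) (hρtr : ρ.trace = 1)
    (y : ℝ) (hy : y ≠ 0)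
    (A : Matrix (Fin n → Fin d) (Fin n → Fin d) ℂ) (hPA : symmetrize d n A = 0) :
    symmetrize d n (depolPow d n y (Omega (tensorPow d n ρ) A)) = 0 := by
  have hS : ∑ π : Equiv.Perm (Fin n), permT π A = 0 := by
    rw [symmetrize_eq, smul_eq_zero] at hPA
    refine hPA.resolve_left ?_
    exact inv_ne_zero (Nat.cast_ne_zero.mpr n.factorial_ne_zero)
  have hO : ∑ π : Equiv.Perm (Fin n), Omega (tensorPow d n ρ) (permT π A) = 0 := by
    simp only [Omega]
    rw [← Finset.smul_sum, Finset.sum_add_distrib, ← Finset.mul_sum, ← Finset.sum_mul, hS]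
    simp
  rw [symmetrize_eq]
  simp only [permT_depolPow, permT_Omega]
  rw [← depolPow_sum, hO]
  have h0 := depolPow_sum d n y (∅ : Finset ℕ) (fun _ => 0)
  simp only [Finset.sum_empty] at h0
  rw [h0, smul_zero]
end
end
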